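/- arXiv:1302.1715 — 4 statements merged into one kernel-verified Lean document; each statement's English description precedes it below -/
import Mathlib

section
/- Let p > 7 be a prime. Then Σ_{k=0}^{p-1} C(2k,k) · a_k · 100^{-k} ≡ Σ_{k=0}^{p-1} C(2k,k)^2 · C(4k,2k) · 28^{-4k} (mod p); moreover, if p ≡ 1 or 3 (mod 8), then there are integers x, y with p = x^2 + 2y^2 and both sums are ≡ 4x^2 (mod p) for any such x, while if p ≡ 5 or 7 (mod 8) both sums are ≡ 0 (mod p). -/
open Finset

/-- `a n = ∑_{k=0}^{n} C(n,k)^2·C(2k,k)`. -/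
def a (n : ℕ) : ℕ :=
  ∑ k ∈ Finset.range (n + 1), Nat.choose n k ^ 2 * Nat.choose (2 * k) k

/-- `b^m/m!` for `m ≥ 0`, zero for negative `m`. -/
def EE (b : ℚ) (m : ℤ) : ℚ := if 0 ≤ m then b ^ m.toNat / (m.toNat.factorial : ℚ) else 0

lemma EE_neg (b : ℚ) (m : ℤ) (h : m < 0) : EE b m = 0 := by
  unfold EE; rw [if_neg (by omega)]

lemma EE_nat (b : ℚ) (m : ℕ) : EE b (m : ℤ) = b ^ m / (m.factorial : ℚ) := by
  unfold EE; rw [if_pos (by omega)]; simp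

lemma EE_pred (b : ℚ) (hb : b ≠ 0) (m m' : ℤ) (h : m' + 1 = m) :
    EE b m' = (m : ℚ) / b * EE b m := by
  subst h
  rcases lt_trichotomy m' (-1) with h | h | h
  · rw [EE_neg _ _ (by omega), EE_neg _ _ (by omega)]; simp
  · subst h; simp [EE_neg]
  · obtain ⟨j, rfl⟩ := Int.eq_ofNat_of_zero_le (show 0 ≤ m' by omega)
    have : ((j : ℤ) + 1) = ((j + 1 : ℕ) : ℤ) := by push_cast; ring
    rw [this, EE_nat, EE_nat, Nat.factorial_succ]
    have : ((j.factorial : ℚ)) ≠ 0 := by positivity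
    push_cast
    field_simp
    ring

lemma fac_succ (n : ℕ) : ((n + 1).factorial : ℚ) = (n + 1) * (n.factorial : ℚ) := by
  rw [Nat.factorial_succ]; push_cast; ring

def F3 (n k : ℕ) : ℚ :=
  ((n + k).factorial : ℚ) / (k.factorial : ℚ) ^ 4 * EE (-3) ((n : ℤ) - 3 * k)

def F2 (n k : ℕ) : ℚ :=
  ((n + 3 * k).factorial : ℚ) / (k.factorial : ℚ) ^ 4 * EE (-27) ((n : ℤ) - k)

def F1 (n k : ℕ) : ℚ :=
  ((n + k).factorial : ℚ) / (k.factorial : ℚ) ^ 2 * EE (-9) ((n : ℤ) - k) * (a k : ℚ)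

def Fa (n k : ℕ) : ℚ :=
  (n.factorial : ℚ) ^ 2 * ((2 * k).factorial : ℚ) / (k.factorial : ℚ) ^ 4
    * EE 1 ((n : ℤ) - k) ^ 2

def FW (n k : ℕ) : ℚ :=
  ((n + k).factorial : ℚ) * ((2 * k).factorial : ℚ) / (k.factorial : ℚ) ^ 4
    * EE 1 ((n : ℤ) - k) * (-1 / 4) ^ k


lemma a_eq (n N : ℕ) (h : n < N) : (a n : ℚ) = ∑ k ∈ range N, Fa n k := by
  have hz : ∑ k ∈ range N, Fa n k = ∑ k ∈ range (n + 1), Fa n k := by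
    symm
    apply sum_subset (by intro x; simp; omega)
    intro k _ hk
    simp only [mem_range, not_lt] at hk
    unfold Fa
    rw [EE_neg _ _ (by omega)]; simp
  rw [hz, a]
  push_cast
  apply sum_congr rfl
  intro k hk
  have hk : k ≤ n := by simp at hk; omega
  unfold Fa
  rw [show (n : ℤ) - k = ((n - k : ℕ) : ℤ) by omega, EE_nat, Nat.cast_choose ℚ hk,
    Nat.cast_choose ℚ (show k ≤ 2 * k by omega), show 2 * k - k = k by omega, one_pow]
  have : (k.factorial : ℚ) ≠ 0 := by positivity
  have : ((n - k).factorial : ℚ) ≠ 0 := by positivity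
  field_simp

lemma F3_rec (n N : ℕ) :
    ∑ k ∈ range (N + 1), (((n : ℚ) + 2) ^ 3 * F3 (n + 2) k
      + (2 * n + 3) * (7 * (n + 1) ^ 2 + 7 * (n + 1) + 3) * F3 (n + 1) k
      + 81 * (n + 1) ^ 3 * F3 n k)
    = (108 + 432 * (n + 1)) * (n + 1 + N) * (n + 2 - 3 * N) * (n + 1 - 3 * N) * (n - 3 * N) / (-27)
      * ((((n + N).factorial : ℚ) / (N.factorial : ℚ) ^ 4) * EE (-3) ((n : ℤ) + 2 - 3 * N) / (-3)) := by
  have key : ∀ k : ℕ, (((n : ℚ) + 2) ^ 3 * F3 (n + 2) k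
      + (2 * n + 3) * (7 * (n + 1) ^ 2 + 7 * (n + 1) + 3) * F3 (n + 1) k
      + 81 * (n + 1) ^ 3 * F3 n k) = (((n + k).factorial : ℚ) / (k.factorial : ℚ) ^ 4)
        * EE (-3) ((n : ℤ) + 2 - 3 * k) *
        (((n : ℚ) + 2) ^ 3 * ((n + k + 1) * (n + k + 2))
        + (2 * n + 3) * (7 * (n + 1) ^ 2 + 7 * (n + 1) + 3) * (n + k + 1) * (n + 2 - 3 * k) / (-3)
        + 81 * (n + 1) ^ 3 * (n + 2 - 3 * k) * (n + 1 - 3 * k) / 9) := by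
    intro k
    unfold F3
    rw [show n + 2 + k = (n + k + 1) + 1 by ring, show n + 1 + k = (n + k) + 1 by ring,
      fac_succ, fac_succ,
      EE_pred (-3) (by norm_num) ((n : ℤ) + 1 - 3 * k) ((n : ℤ) - 3 * k) (by ring),
      show (((n + 2 : ℕ) : ℤ) - 3 * k) = (n : ℤ) + 2 - 3 * k by push_cast; ring,
      show (((n + 1 : ℕ) : ℤ) - 3 * k) = (n : ℤ) + 1 - 3 * k by push_cast; ring,
      EE_pred (-3) (by norm_num) ((n : ℤ) + 2 - 3 * k) ((n : ℤ) + 1 - 3 * k) (by ring)]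
    push_cast
    ring
  induction N with
  | zero => rw [zero_add, sum_range_one, key 0]; push_cast; ring
  | succ N ih =>
    rw [sum_range_succ, ih, key (N + 1)]
    rw [show n + (N + 1) = (n + N) + 1 by ring, fac_succ, fac_succ,
      show (((n : ℤ) + 2 - 3 * ((N + 1 : ℕ) : ℤ))) = (n : ℤ) - 1 - 3 * N by push_cast; ring,
      EE_pred (-3) (by norm_num) ((n : ℤ) - 3 * N) ((n : ℤ) - 1 - 3 * N) (by ring),
      EE_pred (-3) (by norm_num) ((n : ℤ) + 1 - 3 * N) ((n : ℤ) - 3 * N) (by ring),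
      EE_pred (-3) (by norm_num) ((n : ℤ) + 2 - 3 * N) ((n : ℤ) + 1 - 3 * N) (by ring)]
    have : (N.factorial : ℚ) ≠ 0 := by positivity
    have : (N + 1 : ℚ) ≠ 0 := by positivity
    push_cast
    field_simp
    ring

lemma F2_rec (n N : ℕ) :
    ∑ k ∈ range (N + 1), (((n : ℚ) + 2) ^ 3 * F2 (n + 2) k
      + (2 * n + 3) * (7 * (n + 1) ^ 2 + 7 * (n + 1) + 3) * F2 (n + 1) k
      + 81 * (n + 1) ^ 3 * F2 n k)
    = (324 + 432 * (n + 1)) * (n + 1 + 3 * N) * (n + 2 + 3 * N) * (n + 3 + 3 * N) * (n + 2 - N) / (-27)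
      * ((((n + 3 * N).factorial : ℚ) / (N.factorial : ℚ) ^ 4) * EE (-27) ((n : ℤ) + 2 - N) / (-27)) := by
  have key : ∀ k : ℕ, (((n : ℚ) + 2) ^ 3 * F2 (n + 2) k
      + (2 * n + 3) * (7 * (n + 1) ^ 2 + 7 * (n + 1) + 3) * F2 (n + 1) k
      + 81 * (n + 1) ^ 3 * F2 n k) = (((n + 3 * k).factorial : ℚ) / (k.factorial : ℚ) ^ 4)
        * EE (-27) ((n : ℤ) + 2 - k) *
        (((n : ℚ) + 2) ^ 3 * ((n + 3 * k + 1) * (n + 3 * k + 2))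
        + (2 * n + 3) * (7 * (n + 1) ^ 2 + 7 * (n + 1) + 3) * (n + 3 * k + 1) * (n + 2 - k) / (-27)
        + 81 * (n + 1) ^ 3 * (n + 2 - k) * (n + 1 - k) / 27 ^ 2) := by
    intro k
    unfold F2
    rw [show n + 2 + 3 * k = (n + 3 * k + 1) + 1 by ring,
      show n + 1 + 3 * k = (n + 3 * k) + 1 by ring,
      fac_succ, fac_succ,
      EE_pred (-27) (by norm_num) ((n : ℤ) + 1 - k) ((n : ℤ) - k) (by ring),
      show (((n + 2 : ℕ) : ℤ) - k) = (n : ℤ) + 2 - k by push_cast; ring,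
      show (((n + 1 : ℕ) : ℤ) - k) = (n : ℤ) + 1 - k by push_cast; ring,
      EE_pred (-27) (by norm_num) ((n : ℤ) + 2 - k) ((n : ℤ) + 1 - k) (by ring)]
    push_cast
    ring
  induction N with
  | zero => rw [zero_add, sum_range_one, key 0]; push_cast; ring
  | succ N ih =>
    rw [sum_range_succ, ih, key (N + 1)]
    rw [show n + 3 * (N + 1) = (n + 3 * N) + 1 + 1 + 1 by ring, fac_succ, fac_succ, fac_succ,
      fac_succ,
      show (((n : ℤ) + 2 - ((N + 1 : ℕ) : ℤ))) = (n : ℤ) + 1 - N by push_cast; ring,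
      EE_pred (-27) (by norm_num) ((n : ℤ) + 2 - N) ((n : ℤ) + 1 - N) (by ring)]
    have : (N.factorial : ℚ) ≠ 0 := by positivity
    have : (N + 1 : ℚ) ≠ 0 := by positivity
    push_cast
    field_simp
    ring

lemma Fa_rec (n N : ℕ) :
    ∑ k ∈ range (N + 1), (((n : ℚ) + 2) ^ 2 * Fa (n + 2) k
      - (10 * (n + 1) ^ 2 + 10 * (n + 1) + 3) * Fa (n + 1) k
      + 9 * (n + 1) ^ 2 * Fa n k)
    = (16 - 38 * (N + 1) + 12 * (N + 1) ^ 2 + 40 * n - 92 * n * (N + 1) + 24 * n * (N + 1) ^ 2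
        + 32 * n ^ 2 - 70 * n ^ 2 * (N + 1) + 12 * n ^ 2 * (N + 1) ^ 2 + 8 * n ^ 3
        - 16 * n ^ 3 * (N + 1)) * (n + 2 - N) ^ 2
      * ((n.factorial : ℚ) ^ 2 * ((2 * N).factorial : ℚ) / (N.factorial : ℚ) ^ 4
        * EE 1 ((n : ℤ) + 2 - N) ^ 2) := by
  have key : ∀ k : ℕ, (((n : ℚ) + 2) ^ 2 * Fa (n + 2) k
      - (10 * (n + 1) ^ 2 + 10 * (n + 1) + 3) * Fa (n + 1) k
      + 9 * (n + 1) ^ 2 * Fa n k) = ((n.factorial : ℚ) ^ 2 * ((2 * k).factorial : ℚ)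
        / (k.factorial : ℚ) ^ 4 * EE 1 ((n : ℤ) + 2 - k) ^ 2) *
        (((n : ℚ) + 2) ^ 4 * (n + 1) ^ 2
        - (10 * (n + 1) ^ 2 + 10 * (n + 1) + 3) * (n + 1) ^ 2 * (n + 2 - k) ^ 2
        + 9 * (n + 1) ^ 2 * (n + 2 - k) ^ 2 * (n + 1 - k) ^ 2) := by
    intro k
    unfold Fa
    rw [show n + 2 = (n + 1) + 1 by ring,
      fac_succ, fac_succ,
      EE_pred 1 (by norm_num) ((n : ℤ) + 1 - k) ((n : ℤ) - k) (by ring),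
      show (((n + 1 + 1 : ℕ) : ℤ) - k) = (n : ℤ) + 2 - k by push_cast; ring,
      show (((n + 1 : ℕ) : ℤ) - k) = (n : ℤ) + 1 - k by push_cast; ring,
      EE_pred 1 (by norm_num) ((n : ℤ) + 2 - k) ((n : ℤ) + 1 - k) (by ring)]
    push_cast
    ring
  induction N with
  | zero => rw [zero_add, sum_range_one, key 0]; push_cast; ring
  | succ N ih =>
    rw [sum_range_succ, ih, key (N + 1)]
    rw [show 2 * (N + 1) = 2 * N + 1 + 1 by ring, fac_succ (2 * N + 1), fac_succ (2 * N),
      fac_succ N,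
      show (((n : ℤ) + 2 - ((N + 1 : ℕ) : ℤ))) = (n : ℤ) + 1 - N by push_cast; ring,
      EE_pred 1 (by norm_num) ((n : ℤ) + 2 - N) ((n : ℤ) + 1 - N) (by ring)]
    have : (N.factorial : ℚ) ≠ 0 := by positivity
    have : (N + 1 : ℚ) ≠ 0 := by positivity
    push_cast
    field_simp
    ring

lemma FW_rec (n N : ℕ) :
    ∑ k ∈ range (N + 1), (((n : ℚ) + 2) ^ 2 * FW (n + 2) k - (n + 1) ^ 2 * FW n k)
    = (2 * n + 3) * (2 * N + 1) * (n + N + 1) * (n + 2 - N)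
      * (((n + N).factorial : ℚ) * ((2 * N).factorial : ℚ) / (N.factorial : ℚ) ^ 4
        * EE 1 ((n : ℤ) + 2 - N) * (-1 / 4) ^ N) := by
  have key : ∀ k : ℕ, (((n : ℚ) + 2) ^ 2 * FW (n + 2) k - (n + 1) ^ 2 * FW n k)
      = (((n + k).factorial : ℚ) * ((2 * k).factorial : ℚ) / (k.factorial : ℚ) ^ 4
        * EE 1 ((n : ℤ) + 2 - k) * (-1 / 4) ^ k) *
        (((n : ℚ) + 2) ^ 2 * (n + k + 1) * (n + k + 2)
        - (n + 1) ^ 2 * (n + 2 - k) * (n + 1 - k)) := by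
    intro k
    unfold FW
    rw [show n + 2 + k = (n + k + 1) + 1 by ring,
      fac_succ, fac_succ,
      EE_pred 1 (by norm_num) ((n : ℤ) + 1 - k) ((n : ℤ) - k) (by ring),
      show (((n + 2 : ℕ) : ℤ) - k) = (n : ℤ) + 2 - k by push_cast; ring,
      EE_pred 1 (by norm_num) ((n : ℤ) + 2 - k) ((n : ℤ) + 1 - k) (by ring)]
    push_cast
    ring
  induction N with
  | zero => rw [zero_add, sum_range_one, key 0]; push_cast; ring
  | succ N ih =>
    rw [sum_range_succ, ih, key (N + 1)]
    rw [show 2 * (N + 1) = 2 * N + 1 + 1 by ring, fac_succ (2 * N + 1), fac_succ (2 * N),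
      show n + (N + 1) = (n + N) + 1 by ring, fac_succ (n + N), pow_succ (-1 / 4 : ℚ) N,
      fac_succ N,
      show (((n : ℤ) + 2 - ((N + 1 : ℕ) : ℤ))) = (n : ℤ) + 1 - N by push_cast; ring,
      EE_pred 1 (by norm_num) ((n : ℤ) + 2 - N) ((n : ℤ) + 1 - N) (by ring)]
    have : (N.factorial : ℚ) ≠ 0 := by positivity
    have : (N + 1 : ℚ) ≠ 0 := by positivity
    generalize ((-1 / 4 : ℚ) ^ N) = w
    push_cast
    field_simp
    ring

lemma a_rec (n : ℕ) : ((n : ℚ) + 2) ^ 2 * a (n + 2)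
    = (10 * (n + 1) ^ 2 + 10 * (n + 1) + 3) * a (n + 1) - 9 * (n + 1) ^ 2 * a n := by
  have h := Fa_rec n (n + 2)
  rw [sum_add_distrib, sum_sub_distrib, ← mul_sum, ← mul_sum, ← mul_sum,
    ← a_eq _ _ (by omega), ← a_eq _ _ (by omega), ← a_eq _ _ (by omega)] at h
  push_cast at h
  linear_combination h

lemma F1_rec (n N : ℕ) :
    ∑ k ∈ range (N + 1), (((n : ℚ) + 2) ^ 3 * F1 (n + 2) k
      + (2 * n + 3) * (7 * (n + 1) ^ 2 + 7 * (n + 1) + 3) * F1 (n + 1) k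
      + 81 * (n + 1) ^ 3 * F1 n k)
    = (n + 1 + N) * (n + 2 - N) / 81 * (18 * (2 * n + 3)) *
      ((((n + N).factorial : ℚ) / (N.factorial : ℚ) ^ 2) * EE (-9) ((n : ℤ) + 2 - N))
      * ((N + 1) ^ 2 * a (N + 1) + (n + 1 - N) * (n + 2 + N) * a N) := by
  have key : ∀ k : ℕ, (((n : ℚ) + 2) ^ 3 * F1 (n + 2) k
      + (2 * n + 3) * (7 * (n + 1) ^ 2 + 7 * (n + 1) + 3) * F1 (n + 1) k
      + 81 * (n + 1) ^ 3 * F1 n k) = (((n + k).factorial : ℚ) / (k.factorial : ℚ) ^ 2)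
        * EE (-9) ((n : ℤ) + 2 - k) * a k *
        (((n : ℚ) + 2) ^ 3 * ((n + k + 1) * (n + k + 2))
        + (2 * n + 3) * (7 * (n + 1) ^ 2 + 7 * (n + 1) + 3) * (n + k + 1) * (n + 2 - k) / (-9)
        + 81 * (n + 1) ^ 3 * (n + 2 - k) * (n + 1 - k) / 9 ^ 2) := by
    intro k
    unfold F1
    rw [show n + 2 + k = (n + k + 1) + 1 by ring,
      show n + 1 + k = (n + k) + 1 by ring,
      fac_succ, fac_succ,
      EE_pred (-9) (by norm_num) ((n : ℤ) + 1 - k) ((n : ℤ) - k) (by ring),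
      show (((n + 2 : ℕ) : ℤ) - k) = (n : ℤ) + 2 - k by push_cast; ring,
      show (((n + 1 : ℕ) : ℤ) - k) = (n : ℤ) + 1 - k by push_cast; ring,
      EE_pred (-9) (by norm_num) ((n : ℤ) + 2 - k) ((n : ℤ) + 1 - k) (by ring)]
    push_cast
    ring
  induction N with
  | zero =>
    rw [zero_add, sum_range_one, key 0]
    have h0 : a 0 = 1 := by decide
    have h1 : a 1 = 3 := by decide
    rw [h0, h1]; push_cast; ring
  | succ N ih =>
    rw [sum_range_succ, ih, key (N + 1)]
    have hr := a_rec N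
    rw [show N + 1 + 1 = N + 2 by ring]
    have hr' : (((N + 1 : ℕ) : ℚ) + 1) ^ 2 * (a (N + 2) : ℚ) = 
      (10 * (N + 1) ^ 2 + 10 * (N + 1) + 3) * a (N + 1) - 9 * (N + 1) ^ 2 * a N := by
      rw [← hr]; push_cast; ring
    rw [hr']
    rw [show n + (N + 1) = (n + N) + 1 by ring, fac_succ, fac_succ,
      show (((n : ℤ) + 2 - ((N + 1 : ℕ) : ℤ))) = (n : ℤ) + 1 - N by push_cast; ring,
      EE_pred (-9) (by norm_num) ((n : ℤ) + 2 - N) ((n : ℤ) + 1 - N) (by ring)]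
    have : (N.factorial : ℚ) ≠ 0 := by positivity
    have : (N + 1 : ℚ) ≠ 0 := by positivity
    push_cast
    field_simp
    ring

lemma F3_choose (n k : ℕ) : F3 n k =
    (((2 * k).choose k ^ 2 * (4 * k).choose (2 * k) * (n + k).choose (4 * k) : ℕ) : ℚ)
      * (-3) ^ (n - 3 * k) := by
  unfold F3
  by_cases h : 3 * k ≤ n
  · rw [show (n : ℤ) - 3 * k = ((n - 3 * k : ℕ) : ℤ) by omega, EE_nat]
    push_cast
    rw [Nat.cast_choose ℚ (show k ≤ 2 * k by omega), show 2 * k - k = k by omega,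
      Nat.cast_choose ℚ (show 2 * k ≤ 4 * k by omega), show 4 * k - 2 * k = 2 * k by omega,
      Nat.cast_choose ℚ (show 4 * k ≤ n + k by omega), show n + k - 4 * k = n - 3 * k by omega]
    have : (k.factorial : ℚ) ≠ 0 := by positivity
    have : ((2 * k).factorial : ℚ) ≠ 0 := by positivity
    have : ((4 * k).factorial : ℚ) ≠ 0 := by positivity
    have : ((n - 3 * k).factorial : ℚ) ≠ 0 := by positivity
    field_simp
  · rw [EE_neg _ _ (by omega), Nat.choose_eq_zero_of_lt (show n + k < 4 * k by omega)]; simp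

lemma F2_choose (n k : ℕ) : F2 n k =
    (((2 * k).choose k ^ 2 * (4 * k).choose (2 * k) * (n + 3 * k).choose (4 * k) : ℕ) : ℚ)
      * (-27) ^ (n - k) := by
  unfold F2
  by_cases h : k ≤ n
  · rw [show (n : ℤ) - k = ((n - k : ℕ) : ℤ) by omega, EE_nat]
    push_cast
    rw [Nat.cast_choose ℚ (show k ≤ 2 * k by omega), show 2 * k - k = k by omega,
      Nat.cast_choose ℚ (show 2 * k ≤ 4 * k by omega), show 4 * k - 2 * k = 2 * k by omega,
      Nat.cast_choose ℚ (show 4 * k ≤ n + 3 * k by omega), show n + 3 * k - 4 * k = n - k by omega]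
    have : (k.factorial : ℚ) ≠ 0 := by positivity
    have : ((2 * k).factorial : ℚ) ≠ 0 := by positivity
    have : ((4 * k).factorial : ℚ) ≠ 0 := by positivity
    have : ((n - k).factorial : ℚ) ≠ 0 := by positivity
    field_simp
  · rw [EE_neg _ _ (by omega), Nat.choose_eq_zero_of_lt (show n + 3 * k < 4 * k by omega)]; simp

lemma F1_choose (n k : ℕ) : F1 n k =
    (((2 * k).choose k * a k * (n + k).choose (2 * k) : ℕ) : ℚ) * (-9) ^ (n - k) := by
  unfold F1
  by_cases h : k ≤ n
  · rw [show (n : ℤ) - k = ((n - k : ℕ) : ℤ) by omega, EE_nat]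
    push_cast
    rw [Nat.cast_choose ℚ (show k ≤ 2 * k by omega), show 2 * k - k = k by omega,
      Nat.cast_choose ℚ (show 2 * k ≤ n + k by omega), show n + k - 2 * k = n - k by omega]
    have : (k.factorial : ℚ) ≠ 0 := by positivity
    have : ((2 * k).factorial : ℚ) ≠ 0 := by positivity
    have : ((n - k).factorial : ℚ) ≠ 0 := by positivity
    field_simp
  · rw [EE_neg _ _ (by omega), Nat.choose_eq_zero_of_lt (show n + k < 2 * k by omega)]; simp

lemma FW_choose (n k : ℕ) : FW n k =
    (((2 * k).choose k ^ 2 * (n + k).choose (2 * k) : ℕ) : ℚ) * (-1 / 4) ^ k := by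
  unfold FW
  by_cases h : k ≤ n
  · rw [show (n : ℤ) - k = ((n - k : ℕ) : ℤ) by omega, EE_nat]
    push_cast
    rw [Nat.cast_choose ℚ (show k ≤ 2 * k by omega), show 2 * k - k = k by omega,
      Nat.cast_choose ℚ (show 2 * k ≤ n + k by omega), show n + k - 2 * k = n - k by omega]
    have : (k.factorial : ℚ) ≠ 0 := by positivity
    have : ((2 * k).factorial : ℚ) ≠ 0 := by positivity
    have : ((n - k).factorial : ℚ) ≠ 0 := by positivity
    rw [one_pow]
    generalize ((-1 / 4 : ℚ) ^ k) = w
    field_simp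
  · rw [EE_neg _ _ (by omega), Nat.choose_eq_zero_of_lt (show n + k < 2 * k by omega)]; simp

lemma sum_only_zero (N : ℕ) (hN : 0 < N) (f : ℕ → ℚ) (h : ∀ k, 1 ≤ k → f k = 0) :
    ∑ k ∈ range N, f k = f 0 := by
  apply sum_eq_single_of_mem 0 (by simpa using hN)
  intro b _ hb
  exact h b (by omega)

lemma sum_only_two (N : ℕ) (hN : 1 < N) (f : ℕ → ℚ) (h : ∀ k, 2 ≤ k → f k = 0) :
    ∑ k ∈ range N, f k = f 0 + f 1 := by
  obtain ⟨M, rfl⟩ : ∃ M, N = M + 2 := ⟨N - 2, by omega⟩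
  rw [sum_range_succ', sum_range_succ', sum_eq_zero (fun k _ => h _ (by omega))]
  ring

lemma rec_unique (N : ℕ) (u v : ℕ → ℚ) (h0 : 0 < N → u 0 = v 0) (h1 : 1 < N → u 1 = v 1)
    (hu : ∀ n, n + 2 < N → ((n : ℚ) + 2) ^ 3 * u (n + 2)
      + (2 * n + 3) * (7 * (n + 1) ^ 2 + 7 * (n + 1) + 3) * u (n + 1) + 81 * (n + 1) ^ 3 * u n = 0)
    (hv : ∀ n, n + 2 < N → ((n : ℚ) + 2) ^ 3 * v (n + 2)
      + (2 * n + 3) * (7 * (n + 1) ^ 2 + 7 * (n + 1) + 3) * v (n + 1) + 81 * (n + 1) ^ 3 * v n = 0) :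
    ∀ n, n < N → u n = v n := by
  intro n
  induction n using Nat.twoStepInduction with
  | zero => exact h0
  | one => exact h1
  | more n i1 i2 =>
    intro hn
    have e1 := i1 (by omega)
    have e2 := i2 (by omega)
    have a1 := hu n hn
    have a2 := hv n hn
    rw [e1, e2] at a1
    have h3 : ((n : ℚ) + 2) ^ 3 ≠ 0 := by positivity
    apply mul_left_cancel₀ h3
    linear_combination a1 - a2

lemma F3_sum_rec (n N : ℕ) (h : n + 2 < N) : ((n : ℚ) + 2) ^ 3 * (∑ k ∈ range N, F3 (n + 2) k)
      + (2 * n + 3) * (7 * (n + 1) ^ 2 + 7 * (n + 1) + 3) * (∑ k ∈ range N, F3 (n + 1) k)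
      + 81 * (n + 1) ^ 3 * (∑ k ∈ range N, F3 n k) = 0 := by
  obtain ⟨M, rfl⟩ : ∃ M, N = M + 1 := ⟨N - 1, by omega⟩
  have := F3_rec n M
  rw [sum_add_distrib, sum_add_distrib, ← mul_sum, ← mul_sum, ← mul_sum] at this
  rw [this]
  by_cases h2 : M = 0
  · omega
  · rw [EE_neg _ _ (by omega)]; simp

lemma F2_sum_rec (n N : ℕ) (h : n + 2 < N) : ((n : ℚ) + 2) ^ 3 * (∑ k ∈ range N, F2 (n + 2) k)
      + (2 * n + 3) * (7 * (n + 1) ^ 2 + 7 * (n + 1) + 3) * (∑ k ∈ range N, F2 (n + 1) k)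
      + 81 * (n + 1) ^ 3 * (∑ k ∈ range N, F2 n k) = 0 := by
  obtain ⟨M, rfl⟩ : ∃ M, N = M + 1 := ⟨N - 1, by omega⟩
  have := F2_rec n M
  rw [sum_add_distrib, sum_add_distrib, ← mul_sum, ← mul_sum, ← mul_sum] at this
  rw [this]
  by_cases h2 : M = n + 2
  · subst h2; push_cast; ring
  · rw [EE_neg _ _ (by omega)]; simp

lemma F1_sum_rec (n N : ℕ) (h : n + 2 < N) : ((n : ℚ) + 2) ^ 3 * (∑ k ∈ range N, F1 (n + 2) k)
      + (2 * n + 3) * (7 * (n + 1) ^ 2 + 7 * (n + 1) + 3) * (∑ k ∈ range N, F1 (n + 1) k)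
      + 81 * (n + 1) ^ 3 * (∑ k ∈ range N, F1 n k) = 0 := by
  obtain ⟨M, rfl⟩ : ∃ M, N = M + 1 := ⟨N - 1, by omega⟩
  have := F1_rec n M
  rw [sum_add_distrib, sum_add_distrib, ← mul_sum, ← mul_sum, ← mul_sum] at this
  rw [this]
  by_cases h2 : M = n + 2
  · subst h2; push_cast; ring
  · rw [EE_neg _ _ (by omega)]; simp

lemma F3_neg (n k : ℕ) (h : n < 3 * k) : F3 n k = 0 := by
  unfold F3; rw [EE_neg _ _ (by omega)]; simp
lemma F2_neg (n k : ℕ) (h : n < k) : F2 n k = 0 := by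
  unfold F2; rw [EE_neg _ _ (by omega)]; simp
lemma F1_neg (n k : ℕ) (h : n < k) : F1 n k = 0 := by
  unfold F1; rw [EE_neg _ _ (by omega)]; simp
lemma FW_neg (n k : ℕ) (h : n < k) : FW n k = 0 := by
  unfold FW; rw [EE_neg _ _ (by omega)]; simp

lemma F1_eq_F2 (N n : ℕ) (h : n < N) : ∑ k ∈ range N, F1 n k = ∑ k ∈ range N, F2 n k := by
  refine rec_unique N (fun n => ∑ k ∈ range N, F1 n k) (fun n => ∑ k ∈ range N, F2 n k) ?_ ?_
    (fun n => F1_sum_rec n N) (fun n => F2_sum_rec n N) n h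
  · intro hN
    rw [sum_only_zero N hN _ (fun k hk => F1_neg 0 k (by omega)),
      sum_only_zero N hN _ (fun k hk => F2_neg 0 k (by omega)), F1_choose, F2_choose]
    norm_num [a]
  · intro hN
    rw [sum_only_two N hN _ (fun k hk => F1_neg 1 k (by omega)),
      sum_only_two N hN _ (fun k hk => F2_neg 1 k (by omega)), F1_choose, F2_choose,
      F1_choose, F2_choose]
    norm_num [a, sum_range_succ, Nat.choose]

lemma F2_eq_F3 (N n : ℕ) (h : n < N) : ∑ k ∈ range N, F2 n k = ∑ k ∈ range N, F3 n k := by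
  refine rec_unique N (fun n => ∑ k ∈ range N, F2 n k) (fun n => ∑ k ∈ range N, F3 n k) ?_ ?_
    (fun n => F2_sum_rec n N) (fun n => F3_sum_rec n N) n h
  · intro hN
    rw [sum_only_zero N hN _ (fun k hk => F2_neg 0 k (by omega)),
      sum_only_zero N hN _ (fun k hk => F3_neg 0 k (by omega)), F2_choose, F3_choose]
    norm_num
  · intro hN
    rw [sum_only_two N hN _ (fun k hk => F2_neg 1 k (by omega)),
      sum_only_two N hN _ (fun k hk => F3_neg 1 k (by omega)), F2_choose, F3_choose,
      F2_choose, F3_choose]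
    norm_num [Nat.choose]

lemma FW_sum_rec (n N : ℕ) (h : n + 2 < N) : ((n : ℚ) + 2) ^ 2 * (∑ k ∈ range N, FW (n + 2) k)
      = (n + 1) ^ 2 * (∑ k ∈ range N, FW n k) := by
  obtain ⟨M, rfl⟩ : ∃ M, N = M + 1 := ⟨N - 1, by omega⟩
  have := FW_rec n M
  rw [sum_sub_distrib, ← mul_sum, ← mul_sum] at this
  rw [← sub_eq_zero, this]
  by_cases h2 : M = n + 2
  · subst h2; push_cast; ring
  · rw [EE_neg _ _ (by omega)]; simp

lemma FW_odd (N f : ℕ) (h : 2 * f + 1 < N) : ∑ k ∈ range N, FW (2 * f + 1) k = 0 := by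
  induction f with
  | zero =>
    rw [sum_only_two N (by omega) _ (fun k hk => FW_neg _ k (by omega)), FW_choose, FW_choose]
    norm_num [Nat.choose]
  | succ f ih =>
    have := FW_sum_rec (2 * f + 1) N (by omega)
    rw [ih (by omega), mul_zero] at this
    have h3 : (((2 * f + 1 : ℕ) : ℚ) + 2) ^ 2 ≠ 0 := by positivity
    exact (mul_eq_zero.mp this).resolve_left h3

lemma FW_even (N f : ℕ) (h : 2 * f < N) :
    ∑ k ∈ range N, FW (2 * f) k = ((2 * f).choose f / 4 ^ f : ℚ) ^ 2 := by
  induction f with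
  | zero =>
    rw [sum_only_zero N (by omega) _ (fun k hk => FW_neg _ k (by omega)), FW_choose]
    norm_num
  | succ f ih =>
    have := FW_sum_rec (2 * f) N (by omega)
    rw [ih (by omega)] at this
    have h3 : (((2 * f : ℕ) : ℚ) + 2) ^ 2 ≠ 0 := by positivity
    apply mul_left_cancel₀ h3
    rw [show 2 * (f + 1) = 2 * f + 2 by ring, this]
    have hc := Nat.succ_mul_centralBinom_succ f
    rw [Nat.centralBinom, Nat.centralBinom, show 2 * (f + 1) = 2 * f + 2 by ring] at hc
    have hc' : ((f : ℚ) + 1) * ((2 * f + 2).choose (f + 1) : ℚ)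
      = 2 * (2 * f + 1) * ((2 * f).choose f : ℚ) := by exact_mod_cast hc
    rw [pow_succ (4 : ℚ) f]
    have h4 : (4 : ℚ) ^ f ≠ 0 := by positivity
    generalize (4 : ℚ) ^ f = w at *
    push_cast
    field_simp
    linear_combination (-4) * (((f : ℚ) + 1) * ((2 * f + 2).choose (f + 1) : ℚ) + 2 * (2 * f + 1) * ((2 * f).choose f : ℚ)) * hc'

section modp
variable {p : ℕ} [hpp : Fact p.Prime]

lemma choose_modp (m j : ℕ) (h : j + m < p) :
    (((j + m).choose m : ℕ) : ZMod p) = (-1) ^ j * ((p - 1 - m).choose j : ℕ) := by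
  induction j with
  | zero => simp
  | succ j ih =>
    have ih := ih (by omega)
    have hj : ((j + 1 : ℕ) : ZMod p) ≠ 0 := by
      rw [Ne, ZMod.natCast_eq_zero_iff]
      intro hd
      have := Nat.le_of_dvd (by omega) hd
      omega
    apply mul_left_cancel₀ hj
    have e1 : (j + 1) * (j + 1 + m).choose m = (j + m + 1) * (j + m).choose m := by
      have := Nat.add_one_mul_choose_eq (j + m) j
      have h1 : (j + m).choose j = (j + m).choose m := by
        rw [Nat.choose_symm_add]
      have h2 : (j + m).succ.choose j.succ = (j + 1 + m).choose m := by
        rw [show (j + m).succ = (j + 1) + m by omega, ← Nat.choose_symm_add]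
      rw [h1, h2] at this
      linarith
    have e2 : (j + 1) * (p - 1 - m).choose (j + 1) = (p - 1 - m - j) * (p - 1 - m).choose j := by
      have := Nat.choose_succ_right_eq (p - 1 - m) j
      linarith
    have e1' := congrArg (Nat.cast : ℕ → ZMod p) e1
    have e2' := congrArg (Nat.cast : ℕ → ZMod p) e2
    have e3 : ((p - 1 - m - j : ℕ) : ZMod p) = -(j + m + 1) := by
      have : (p - 1 - m - j) + (j + m + 1) = p := by omega
      have := congrArg (Nat.cast : ℕ → ZMod p) this
      push_cast at this
      rw [CharP.cast_eq_zero (ZMod p) p] at this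
      linear_combination this
    rw [Nat.cast_mul, Nat.cast_mul] at e1' e2'
    rw [e3] at e2'
    rw [e1', ih, pow_succ]
    push_cast at e2' ⊢
    linear_combination (-1) ^ j * e2'

lemma sum_trunc (d s : ℕ) (b : ZMod p) (hd : d ≤ s) (hs : s < p) :
    ∑ n ∈ range p, (((n + (s - d)).choose s : ℕ) : ZMod p) * (-b) ^ (n - d)
      = (1 + b) ^ (p - 1 - s) := by
  have h1 : ∑ n ∈ range p, (((n + (s - d)).choose s : ℕ) : ZMod p) * (-b) ^ (n - d)
      = ∑ j ∈ range (p - d), (((j + s).choose s : ℕ) : ZMod p) * (-b) ^ j := by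
    rw [show range p = range (d + (p - d)) by congr 1; omega, sum_range_add,
      sum_eq_zero, zero_add]
    · apply sum_congr rfl
      intro j _
      rw [show d + j + (s - d) = j + s by omega, show d + j - d = j by omega]
    · intro n hn
      simp only [mem_range] at hn
      rw [Nat.choose_eq_zero_of_lt (by omega)]; simp
  have h2 : ∑ j ∈ range (p - d), (((j + s).choose s : ℕ) : ZMod p) * (-b) ^ j
      = ∑ j ∈ range (p - s), (((j + s).choose s : ℕ) : ZMod p) * (-b) ^ j := by
    symm
    apply sum_subset (by intro x; simp; omega)
    intro j hj hj'
    simp only [mem_range, not_lt] at hj hj'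
    have : (((j + s).choose s : ℕ) : ZMod p) = 0 := by
      rw [ZMod.natCast_eq_zero_iff, add_comm j s]
      exact Nat.Prime.dvd_choose_add hpp.out hs (by omega) (by omega)
    rw [this, zero_mul]
  rw [h1, h2, add_comm 1 b, add_pow, show p - 1 - s + 1 = p - s by omega]
  apply sum_congr rfl
  intro j hj
  simp only [mem_range] at hj
  rw [choose_modp s j (by omega), neg_pow b j, one_pow]
  have : ((-1 : ZMod p) ^ j) * (-1) ^ j = 1 := by rw [← mul_pow]; simp
  linear_combination ((p - 1 - s).choose j : ZMod p) * b ^ j * this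

lemma pow_inv_modp (x : ZMod p) (hx : x ≠ 0) (s : ℕ) (hs : s < p) :
    x ^ (p - 1 - s) = 1 / x ^ s := by
  rw [eq_div_iff (pow_ne_zero _ hx), ← pow_add, show p - 1 - s + s = p - 1 by omega,
    ZMod.pow_card_sub_one_eq_one hx]

lemma cent_zero (k : ℕ) (hk : k < p) (h : p ≤ 2 * k) : (((2 * k).choose k : ℕ) : ZMod p) = 0 := by
  rw [ZMod.natCast_eq_zero_iff, two_mul]
  exact Nat.Prime.dvd_choose_add hpp.out hk hk (by omega)

lemma c_zero (k : ℕ) (hk : k < p) (h : p ≤ 4 * k) :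
    (((2 * k).choose k : ℕ) : ZMod p) ^ 2 * (((4 * k).choose (2 * k) : ℕ) : ZMod p) = 0 := by
  by_cases h2 : p ≤ 2 * k
  · rw [cent_zero k hk h2]; ring
  · have : (((4 * k).choose (2 * k) : ℕ) : ZMod p) = 0 := by
      have := cent_zero (p := p) (2 * k) (by omega) (by omega)
      rwa [show 2 * (2 * k) = 4 * k by ring] at this
    rw [this, mul_zero]

lemma ne_zero_of (m : ℕ) (h : ¬ p ∣ m) : (m : ZMod p) ≠ 0 := by
  rwa [Ne, ZMod.natCast_eq_zero_iff]

/-- the three evaluations -/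
lemma eval3 : ∑ n ∈ range p, ∑ k ∈ range p, (((2 * k).choose k : ℕ) : ZMod p) ^ 2
    * (((4 * k).choose (2 * k) : ℕ) : ZMod p) * (((n + k).choose (4 * k) : ℕ) : ZMod p)
      * (-3) ^ (n - 3 * k) = 
    ∑ k ∈ range p, (((2 * k).choose k : ℕ) : ZMod p) ^ 2
    * (((4 * k).choose (2 * k) : ℕ) : ZMod p) * (1 + 3) ^ (p - 1 - 4 * k) := by
  rw [sum_comm]
  apply sum_congr rfl
  intro k hk
  simp only [mem_range] at hk
  by_cases h : p ≤ 4 * k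
  · simp [c_zero k hk h]
  · rw [← sum_trunc (3 * k) (4 * k) 3 (by omega) (by omega), mul_sum]
    apply sum_congr rfl
    intro n _
    rw [show 4 * k - 3 * k = k by omega]; ring

lemma eval2 : ∑ n ∈ range p, ∑ k ∈ range p, (((2 * k).choose k : ℕ) : ZMod p) ^ 2
    * (((4 * k).choose (2 * k) : ℕ) : ZMod p) * (((n + 3 * k).choose (4 * k) : ℕ) : ZMod p)
      * (-27) ^ (n - k) = 
    ∑ k ∈ range p, (((2 * k).choose k : ℕ) : ZMod p) ^ 2
    * (((4 * k).choose (2 * k) : ℕ) : ZMod p) * (1 + 27) ^ (p - 1 - 4 * k) := by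
  rw [sum_comm]
  apply sum_congr rfl
  intro k hk
  simp only [mem_range] at hk
  by_cases h : p ≤ 4 * k
  · simp [c_zero k hk h]
  · rw [← sum_trunc k (4 * k) 27 (by omega) (by omega), mul_sum]
    apply sum_congr rfl
    intro n _
    rw [show 4 * k - k = 3 * k by omega]; ring

lemma eval1 : ∑ n ∈ range p, ∑ k ∈ range p, (((2 * k).choose k : ℕ) : ZMod p)
    * (a k : ZMod p) * (((n + k).choose (2 * k) : ℕ) : ZMod p)
      * (-9) ^ (n - k) = 
    ∑ k ∈ range p, (((2 * k).choose k : ℕ) : ZMod p)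
    * (a k : ZMod p) * (1 + 9) ^ (p - 1 - 2 * k) := by
  rw [sum_comm]
  apply sum_congr rfl
  intro k hk
  simp only [mem_range] at hk
  by_cases h : p ≤ 2 * k
  · simp [cent_zero k hk h]
  · rw [← sum_trunc k (2 * k) 9 (by omega) (by omega), mul_sum]
    apply sum_congr rfl
    intro n _
    rw [show 2 * k - k = k by omega]; ring

lemma int12 (N n : ℕ) (h : n < N) :
    ∑ k ∈ range N, (((2 * k).choose k * a k * (n + k).choose (2 * k) : ℕ) : ℤ) * (-9) ^ (n - k)
    = ∑ k ∈ range N, (((2 * k).choose k ^ 2 * (4 * k).choose (2 * k) * (n + 3 * k).choose (4 * k) : ℕ) : ℤ)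
      * (-27) ^ (n - k) := by
  have := F1_eq_F2 N n h
  simp only [F1_choose, F2_choose] at this
  exact_mod_cast this

lemma int23 (N n : ℕ) (h : n < N) :
    ∑ k ∈ range N, (((2 * k).choose k ^ 2 * (4 * k).choose (2 * k) * (n + 3 * k).choose (4 * k) : ℕ) : ℤ)
      * (-27) ^ (n - k)
    = ∑ k ∈ range N, (((2 * k).choose k ^ 2 * (4 * k).choose (2 * k) * (n + k).choose (4 * k) : ℕ) : ℤ)
      * (-3) ^ (n - 3 * k) := by
  have := F2_eq_F3 N n h
  simp only [F2_choose, F3_choose] at this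
  exact_mod_cast this

lemma T_eq_S (hp : 7 < p) :
    (∑ k ∈ Finset.range p,
        (Nat.choose (2 * k) k : ZMod p) * (a k : ZMod p) / (100 : ZMod p) ^ k)
      = (∑ k ∈ Finset.range p,
          (Nat.choose (2 * k) k : ZMod p) ^ 2 * (Nat.choose (4 * k) (2 * k) : ZMod p) /
            (28 : ZMod p) ^ (4 * k)) := by
  have h10 : (10 : ZMod p) ≠ 0 := by
    apply ne_zero_of (p := p) 10
    intro h
    have h' : p ∣ 2 * 5 := h
    rcases (Nat.Prime.dvd_mul hpp.out).mp h' with h | h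
    · have := Nat.le_of_dvd (by norm_num) h
      omega
    · have := Nat.le_of_dvd (by norm_num) h
      omega
  have h28 : (28 : ZMod p) ≠ 0 := by
    apply ne_zero_of (p := p) 28
    intro h
    have h' : p ∣ 2 ^ 2 * 7 := h
    rcases (Nat.Prime.dvd_mul hpp.out).mp h' with h | h
    · have := Nat.le_of_dvd (by norm_num) h
      omega
    · have := Nat.le_of_dvd (by norm_num) h
      omega
  trans (∑ k ∈ range p, (((2 * k).choose k : ℕ) : ZMod p)
    * (a k : ZMod p) * (1 + 9) ^ (p - 1 - 2 * k))
  · apply sum_congr rfl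
    intro k hk
    simp only [mem_range] at hk
    by_cases h : p ≤ 2 * k
    · simp [cent_zero k hk h]
    · rw [show (1 + 9 : ZMod p) = 10 by norm_num, pow_inv_modp _ h10 _ (by omega), pow_mul,
        show (10 : ZMod p) ^ 2 = 100 by norm_num]
      ring
  trans (∑ k ∈ range p, (((2 * k).choose k : ℕ) : ZMod p) ^ 2
    * (((4 * k).choose (2 * k) : ℕ) : ZMod p) * (1 + 27) ^ (p - 1 - 4 * k))
  · rw [← eval1, ← eval2]
    apply sum_congr rfl
    intro n hn
    have := congrArg (Int.cast : ℤ → ZMod p) (int12 p n (by simpa using hn))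
    push_cast at this
    exact this
  · apply sum_congr rfl
    intro k hk
    simp only [mem_range] at hk
    by_cases h : p ≤ 4 * k
    · simp [c_zero k hk h]
    · rw [show (1 + 27 : ZMod p) = 28 by norm_num, pow_inv_modp _ h28 _ (by omega)]
      ring

lemma four_ne (hp : 7 < p) : (4 : ZMod p) ≠ 0 := by
  apply ne_zero_of (p := p) 4
  intro h
  have := Nat.le_of_dvd (by norm_num) h
  omega

lemma S_eq_S' (hp : 7 < p) :
    (∑ k ∈ Finset.range p,
          (Nat.choose (2 * k) k : ZMod p) ^ 2 * (Nat.choose (4 * k) (2 * k) : ZMod p) /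
            (28 : ZMod p) ^ (4 * k))
    = (∑ k ∈ Finset.range p,
          (Nat.choose (2 * k) k : ZMod p) ^ 2 * (Nat.choose (4 * k) (2 * k) : ZMod p) /
            (4 : ZMod p) ^ (4 * k)) := by
  have h28 : (28 : ZMod p) ≠ 0 := by
    apply ne_zero_of (p := p) 28
    intro h
    have h' : p ∣ 2 ^ 2 * 7 := h
    rcases (Nat.Prime.dvd_mul hpp.out).mp h' with h | h
    · have := Nat.le_of_dvd (by norm_num) h
      omega
    · have := Nat.le_of_dvd (by norm_num) h
      omega
  trans (∑ k ∈ range p, (((2 * k).choose k : ℕ) : ZMod p) ^ 2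
    * (((4 * k).choose (2 * k) : ℕ) : ZMod p) * (1 + 27) ^ (p - 1 - 4 * k))
  · apply sum_congr rfl
    intro k hk
    simp only [mem_range] at hk
    by_cases h : p ≤ 4 * k
    · simp [c_zero k hk h]
    · rw [show (1 + 27 : ZMod p) = 28 by norm_num, pow_inv_modp _ h28 _ (by omega)]
      ring
  trans (∑ k ∈ range p, (((2 * k).choose k : ℕ) : ZMod p) ^ 2
    * (((4 * k).choose (2 * k) : ℕ) : ZMod p) * (1 + 3) ^ (p - 1 - 4 * k))
  · rw [← eval3, ← eval2]
    apply sum_congr rfl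
    intro n hn
    have := congrArg (Int.cast : ℤ → ZMod p) (int23 p n (by simpa using hn))
    push_cast at this
    exact this
  · apply sum_congr rfl
    intro k hk
    simp only [mem_range] at hk
    by_cases h : p ≤ 4 * k
    · simp [c_zero k hk h]
    · rw [show (1 + 3 : ZMod p) = 4 by norm_num, pow_inv_modp _ (four_ne hp) _ (by omega)]
      ring

lemma c_eq_W (hp : 7 < p) (q : ℕ) (hq : p = 4 * q + 1 ∨ p = 4 * q + 3) (k : ℕ) (hk : 2 * k < p) :
    (((4 * k).choose (2 * k) : ℕ) : ZMod p) = (((q + k).choose (2 * k) : ℕ) : ZMod p) * (-64) ^ k := by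
  induction k with
  | zero => simp
  | succ k ih =>
    have ih := ih (by omega)
    have hne : (((2 * k + 1) * (2 * k + 2) : ℕ) : ZMod p) ≠ 0 := by
      apply ne_zero_of
      intro h
      rcases (Nat.Prime.dvd_mul hpp.out).mp h with h | h
      · have := Nat.le_of_dvd (by omega) h
        omega
      · have := Nat.le_of_dvd (by omega) h
        omega
    apply mul_left_cancel₀ hne
    have e1 : (2 * k + 1) * (2 * k + 2) * (4 * (k + 1)).choose (2 * (k + 1))
        = 4 * (4 * k + 1) * (4 * k + 3) * (4 * k).choose (2 * k) := by
      have h1 := Nat.succ_mul_centralBinom_succ (2 * k)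
      have h2 := Nat.succ_mul_centralBinom_succ (2 * k + 1)
      simp only [Nat.centralBinom] at h1 h2
      rw [show 2 * (2 * k + 1 + 1) = 4 * (k + 1) by ring, show 2 * k + 1 + 1 = 2 * (k + 1) by ring]
        at h2
      rw [show 2 * (2 * k) = 4 * k by ring] at h1
      have : (2 * k + 1) * (2 * k + 2) * (4 * (k + 1)).choose (2 * (k + 1))
        = (2 * k + 1) * (2 * (k + 1) * (4 * (k + 1)).choose (2 * (k + 1))) := by ring
      rw [this, h2]
      have : (2 * k + 1) * (2 * (2 * (2 * k + 1) + 1) * (2 * (2 * k + 1)).choose (2 * k + 1))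
        = 2 * (2 * (2 * k + 1) + 1) * ((2 * k + 1) * (2 * (2 * k + 1)).choose (2 * k + 1)) := by ring
      rw [this, h1]
      ring
    have e2 : ((2 * k + 1) * (2 * k + 2) : ℤ) * ((q + (k + 1)).choose (2 * (k + 1)) : ℕ)
        = (q + k + 1) * (q - k) * ((q + k).choose (2 * k) : ℕ) := by
      have h1 := Nat.add_one_mul_choose_eq (q + k) (2 * k + 1)
      have h2 := Nat.choose_succ_right_eq (q + k) (2 * k)
      rw [show 2 * k + 1 + 1 = 2 * (k + 1) by omega, show q + k + 1 = q + (k + 1) by omega] at h1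
      by_cases hkq : k ≤ q
      · rw [show q + k - 2 * k = q - k by omega] at h2
        have h1' := congrArg (Nat.cast : ℕ → ℤ) h1
        have h2' := congrArg (Nat.cast : ℕ → ℤ) h2
        push_cast [hkq] at h1' h2'
        linear_combination (-(2 * k + 1 : ℤ)) * h1' + (q + k + 1 : ℤ) * h2'
      · rw [Nat.choose_eq_zero_of_lt (show q + (k + 1) < 2 * (k + 1) by omega),
          Nat.choose_eq_zero_of_lt (show q + k < 2 * k by omega)]
        simp
    have e1' := congrArg (Nat.cast : ℕ → ZMod p) e1
    have e2' := congrArg (Int.cast : ℤ → ZMod p) e2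
    push_cast at e1' e2' ⊢
    rw [e1', ih, pow_succ]
    have h0 : (p : ZMod p) = 0 := CharP.cast_eq_zero _ _
    rcases hq with hq | hq
    · have h0 : (4 * q + 1 : ZMod p) = 0 := by
        have := congrArg (Nat.cast : ℕ → ZMod p) hq
        rw [h0] at this
        push_cast at this
        exact this.symm
      linear_combination (64 * (-64) ^ k : ZMod p) * e2' + ((q + k).choose (2 * k) : ZMod p) * (-64) ^ k * (4 * q + 3) * 4 * h0
    · have h0 : (4 * q + 3 : ZMod p) = 0 := by
        have := congrArg (Nat.cast : ℕ → ZMod p) hq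
        rw [h0] at this
        push_cast at this
        exact this.symm
      linear_combination (64 * (-64) ^ k : ZMod p) * e2' + ((q + k).choose (2 * k) : ZMod p) * (-64) ^ k * (4 * q + 1) * 4 * h0

lemma S'_eq_W (hp : 7 < p) (q : ℕ) (hq : p = 4 * q + 1 ∨ p = 4 * q + 3) :
    4 ^ p * (∑ k ∈ Finset.range p,
          (Nat.choose (2 * k) k : ZMod p) ^ 2 * (Nat.choose (4 * k) (2 * k) : ZMod p) /
            (4 : ZMod p) ^ (4 * k)) =
    ((∑ k ∈ range p, ((2 * k).choose k : ℤ) ^ 2 * ((q + k).choose (2 * k) : ℤ) * (-1) ^ k * 4 ^ (p - k) : ℤ)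
       : ZMod p) := by
  push_cast
  rw [mul_sum]
  apply sum_congr rfl
  intro k hk
  simp only [mem_range] at hk
  by_cases h : p ≤ 2 * k
  · simp [cent_zero k hk h]
  · rw [c_eq_W hp q hq k (by omega)]
    have h4 := four_ne hp
    obtain ⟨j, hj⟩ : ∃ j, p = k + j := ⟨p - k, by omega⟩
    have e : (4 : ZMod p) ^ p = 4 ^ k * 4 ^ (p - k) := by rw [← pow_add]; congr 1; omega
    rw [e, show (-64 : ZMod p) = (-1) * 4 ^ 3 by norm_num, mul_pow (-1 : ZMod p), ← pow_mul,
      show 4 * k = k + 3 * k by ring, pow_add]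
    have : (4 : ZMod p) ^ k ≠ 0 := pow_ne_zero _ h4
    have : (4 : ZMod p) ^ (3 * k) ≠ 0 := pow_ne_zero _ h4
    field_simp

lemma W_int (N q : ℕ) : ((∑ k ∈ range N, ((2 * k).choose k : ℤ) ^ 2 * ((q + k).choose (2 * k) : ℤ)
    * (-1) ^ k * 4 ^ (N - k) : ℤ) : ℚ) = 4 ^ N * ∑ k ∈ range N, FW q k := by
  push_cast
  rw [mul_sum]
  apply sum_congr rfl
  intro k hk
  simp only [mem_range] at hk
  rw [FW_choose]
  have e : (4 : ℚ) ^ N = 4 ^ k * 4 ^ (N - k) := by rw [← pow_add]; congr 1; omega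
  rw [e, div_pow]
  have : (4 : ℚ) ^ k ≠ 0 := by positivity
  push_cast
  field_simp

lemma S'_odd (hp : 7 < p) (f : ℕ) (hq : p = 4 * (2 * f + 1) + 1 ∨ p = 4 * (2 * f + 1) + 3) :
    (∑ k ∈ Finset.range p,
          (Nat.choose (2 * k) k : ZMod p) ^ 2 * (Nat.choose (4 * k) (2 * k) : ZMod p) /
            (4 : ZMod p) ^ (4 * k)) = 0 := by
  have h1 := S'_eq_W hp _ hq
  have h2 := W_int p (2 * f + 1)
  rw [FW_odd p f (by omega), mul_zero] at h2
  rw [Int.cast_eq_zero.mp h2, Int.cast_zero] at h1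
  exact (mul_eq_zero.mp h1).resolve_left (pow_ne_zero _ (four_ne hp))

lemma S'_even (hp : 7 < p) (f : ℕ) (hq : p = 4 * (2 * f) + 1 ∨ p = 4 * (2 * f) + 3) :
    (∑ k ∈ Finset.range p,
          (Nat.choose (2 * k) k : ZMod p) ^ 2 * (Nat.choose (4 * k) (2 * k) : ZMod p) /
            (4 : ZMod p) ^ (4 * k)) = (((2 * f).choose f : ZMod p) / 4 ^ f) ^ 2 := by
  have h1 := S'_eq_W hp _ hq
  have h2 := W_int p (2 * f)
  rw [FW_even p f (by omega)] at h2
  have h3 : (∑ k ∈ range p, ((2 * k).choose k : ℤ) ^ 2 * ((2 * f + k).choose (2 * k) : ℤ)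
    * (-1) ^ k * 4 ^ (p - k) : ℤ) = 4 ^ (p - 2 * f) * ((2 * f).choose f : ℤ) ^ 2 := by
    have e : (4 : ℚ) ^ p = (4 ^ f) ^ 2 * 4 ^ (p - 2 * f) := by
      rw [← pow_mul, ← pow_add]; congr 1; omega
    rw [e] at h2
    have : (4 : ℚ) ^ f ≠ 0 := by positivity
    field_simp at h2
    exact_mod_cast h2
  rw [h3] at h1
  have h4 := pow_ne_zero f (four_ne hp)
  apply mul_left_cancel₀ (pow_ne_zero p (four_ne hp))
  rw [h1]
  have e : (4 : ZMod p) ^ p = (4 ^ f) ^ 2 * 4 ^ (p - 2 * f) := by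
    rw [← pow_mul, ← pow_add]; congr 1; omega
  rw [e]
  push_cast
  field_simp

end modp

section charsum
variable {F : Type*} [Field F] [Fintype F] [DecidableEq F]

/-- Jacobsthal type sum. -/
def BB (F : Type*) [Field F] [Fintype F] [DecidableEq F] (k : F) : ℤ :=
  ∑ u : F, quadraticChar F (u * (u ^ 4 + k))

lemma BB_mul (k m : F) (hm : m ≠ 0) : BB F (k * m ^ 4) = quadraticChar F m * BB F k := by
  unfold BB
  rw [mul_sum, ← Equiv.sum_comp (Equiv.mulLeft₀ m hm)]
  apply sum_congr rfl
  intro u _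
  rw [Equiv.mulLeft₀_apply, ← map_mul]
  have : m * u * ((m * u) ^ 4 + k * m ^ 4) = (m ^ 2) ^ 2 * (m * (u * (u ^ 4 + k))) := by ring
  rw [this, map_mul, quadraticChar_sq_one' (pow_ne_zero _ hm), one_mul]

lemma BB_inv (k : F) (hk : k ≠ 0) : BB F k = quadraticChar F k * BB F k⁻¹ := by
  unfold BB
  rw [mul_sum, ← Equiv.sum_comp ((inv_involutive (G := F)).toPerm _)]
  apply sum_congr rfl
  intro u _
  rw [Function.Involutive.coe_toPerm, ← map_mul]
  by_cases hu : u = 0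
  · simp [hu]
  · have : k * (u * (u ^ 4 + k⁻¹)) = (u ^ 3) ^ 2 * (u⁻¹ * (u⁻¹ ^ 4 + k)) := by
      field_simp
      ring
    rw [this, map_mul _ ((u ^ 3) ^ 2), quadraticChar_sq_one' (pow_ne_zero _ hu), one_mul]

lemma sum_quad (hF : ringChar F ≠ 2) (x y : F) :
    ∑ k : F, quadraticChar F ((x + k) * (y + k)) = if x = y then (Fintype.card F : ℤ) - 1 else -1 := by
  have h1 : ∑ k : F, quadraticChar F ((x + k) * (y + k))
      = ∑ k : F, quadraticChar F (k * (k + (y - x))) := by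
    rw [← Equiv.sum_comp (Equiv.addLeft x) (fun k => quadraticChar F (k * (k + (y - x))))]
    apply sum_congr rfl
    intro k _
    simp only [Equiv.coe_addLeft]
    congr 2
    ring
  rw [h1]
  have h2 : ∀ k : F, quadraticChar F (k * (k + (y - x)))
      = quadraticChar F (1 + (y - x) * k⁻¹) - if k = 0 then 1 else 0 := by
    intro k
    by_cases hk : k = 0
    · simp [hk]
    · rw [if_neg hk, sub_zero]
      have : k * (k + (y - x)) = k ^ 2 * (1 + (y - x) * k⁻¹) := by field_simp
      rw [this, map_mul, quadraticChar_sq_one' hk, one_mul]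
  simp only [h2]
  rw [sum_sub_distrib]
  have h3 : ∑ k : F, (if k = 0 then (1 : ℤ) else 0) = 1 := by simp
  rw [h3]
  split_ifs with hxy
  · subst hxy; simp
  · have hc : y - x ≠ 0 := sub_ne_zero.mpr (Ne.symm hxy)
    have h4 : ∑ k : F, quadraticChar F (1 + (y - x) * k⁻¹) = 0 := by
      rw [← quadraticChar_sum_zero hF]
      rw [← Equiv.sum_comp ((((inv_involutive (G := F)).toPerm _).trans (Equiv.mulLeft₀ (y - x) hc)).trans (Equiv.addLeft 1))
        (fun z => quadraticChar F z)]
      apply sum_congr rfl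
      intro k _
      rfl
    rw [h4]; simp

lemma sum_fourth_roots (hF : ringChar F ≠ 2) (z : F) (hz : z ^ 4 = -1) :
    ∑ w : F, (if w ^ 4 = 1 then quadraticChar F w else 0) = 4 := by
  have h2 : (2 : F) ≠ 0 := Ring.two_ne_zero hF
  have hz0 : z ≠ 0 := by
    rintro rfl
    norm_num at hz
  have hi : (z ^ 2) ^ 2 = -1 := by rw [← hz]; ring
  have hm1 : quadraticChar F (-1) = 1 := by
    rw [← hi]; exact quadraticChar_sq_one' (pow_ne_zero _ hz0)
  have hci : quadraticChar F (z ^ 2) = 1 := quadraticChar_sq_one' hz0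
  have hcni : quadraticChar F (-z ^ 2) = 1 := by
    rw [neg_eq_neg_one_mul, map_mul, hm1, hci, one_mul]
  rw [← sum_filter]
  have hset : (univ.filter (fun w : F => w ^ 4 = 1)) = {1, -1, z ^ 2, -z ^ 2} := by
    ext w
    simp only [mem_filter, mem_univ, true_and, mem_insert, mem_singleton]
    constructor
    · intro h
      have : (w - 1) * ((w + 1) * ((w - z ^ 2) * (w + z ^ 2))) = 0 := by
        linear_combination h - (w ^ 2 - 1) * hi
      rcases mul_eq_zero.mp this with h | h
      · left; linear_combination h
      rcases mul_eq_zero.mp h with h | h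
      · right; left; linear_combination h
      rcases mul_eq_zero.mp h with h | h
      · right; right; left; linear_combination h
      · right; right; right; linear_combination h
    · rintro (rfl | rfl | rfl | rfl)
      · ring
      · ring
      · linear_combination ((z ^ 2) ^ 2 - 1) * hi
      · linear_combination ((z ^ 2) ^ 2 - 1) * hi
  have n1 : (1 : F) ≠ -1 := fun h => h2 (by linear_combination h)
  have n2 : (1 : F) ≠ z ^ 2 := fun h => h2 (by rw [← h] at hi; linear_combination hi)
  have n3 : (1 : F) ≠ -z ^ 2 := fun h => h2 (by
    have : z ^ 2 = -1 := by linear_combination h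
    rw [this] at hi; linear_combination hi)
  have n4 : (-1 : F) ≠ z ^ 2 := fun h => h2 (by rw [← h] at hi; linear_combination hi)
  have n5 : (-1 : F) ≠ -z ^ 2 := fun h => h2 (by
    have : z ^ 2 = 1 := by linear_combination h
    rw [this] at hi; linear_combination hi)
  have n6 : z ^ 2 ≠ -z ^ 2 := fun h => by
    have : 2 * z ^ 2 = 0 := by linear_combination h
    exact (mul_ne_zero h2 (pow_ne_zero 2 hz0)) this
  rw [hset, sum_insert (by simp [n1, n2, n3]), sum_insert (by simp [n4, n5]),
    sum_insert (by simpa using n6), sum_singleton, map_one, hm1, hci, hcni]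
  norm_num

lemma BB_second_moment (hF : ringChar F ≠ 2) (z : F) (hz : z ^ 4 = -1) :
    ∑ k : F, BB F k ^ 2 = 4 * (Fintype.card F : ℤ) * ((Fintype.card F : ℤ) - 1) := by
  set q : ℤ := (Fintype.card F : ℤ) with hq
  have h1 : ∑ k : F, BB F k ^ 2 = ∑ u : F, ∑ v : F, quadraticChar F (u * v) *
      ∑ k : F, quadraticChar F ((u ^ 4 + k) * (v ^ 4 + k)) := by
    unfold BB
    simp only [sq, sum_mul_sum]
    rw [sum_comm]
    apply sum_congr rfl
    intro u _
    rw [sum_comm]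
    apply sum_congr rfl
    intro v _
    rw [mul_sum]
    apply sum_congr rfl
    intro k _
    simp only [map_mul]
    ring
  have h2 : ∀ u v : F, quadraticChar F (u * v) *
      ∑ k : F, quadraticChar F ((u ^ 4 + k) * (v ^ 4 + k))
      = q * (if v ^ 4 = u ^ 4 then quadraticChar F (u * v) else 0)
        - quadraticChar F u * quadraticChar F v := by
    intro u v
    rw [sum_quad hF, map_mul]
    by_cases h : u ^ 4 = v ^ 4
    · rw [if_pos h, if_pos h.symm]; ring
    · rw [if_neg h, if_neg (Ne.symm h)]; ring
  rw [h1]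
  simp only [h2, sum_sub_distrib]
  rw [← sum_mul_sum, quadraticChar_sum_zero hF, zero_mul, sub_zero]
  have h3 : ∀ u : F, ∑ v : F, q * (if v ^ 4 = u ^ 4 then quadraticChar F (u * v) else 0)
      = if u = 0 then 0 else 4 * q := by
    intro u
    rw [← mul_sum]
    by_cases hu : u = 0
    · simp [hu]
    · rw [if_neg hu, ← Equiv.sum_comp (Equiv.mulLeft₀ u hu), mul_comm 4 q,
        ← sum_fourth_roots hF z hz]
      congr 1
      apply sum_congr rfl
      intro w _
      simp only [Equiv.mulLeft₀_apply]
      have e : (u * w) ^ 4 = u ^ 4 ↔ w ^ 4 = 1 := by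
        rw [mul_pow]
        exact mul_eq_left₀ (pow_ne_zero 4 hu)
      have e2 : quadraticChar F (u * (u * w)) = quadraticChar F w := by
        rw [← mul_assoc, ← sq, map_mul, quadraticChar_sq_one' hu, one_mul]
      simp only [e, e2]
  simp only [h3]
  rw [sum_ite, sum_const_zero, zero_add, sum_const]
  have : (univ.filter (fun u : F => ¬ u = 0)).card = Fintype.card F - 1 := by
    rw [filter_not, filter_eq' univ (0 : F), if_pos (mem_univ _), card_sdiff]
    simp
  rw [this, nsmul_eq_mul, Nat.cast_sub Fintype.card_pos]
  push_cast
  rw [← hq]; ring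

lemma sum_periodic (m : ℕ) (f : ℕ → ℤ) (hf : ∀ j, f (j + 4) = f j) :
    ∑ j ∈ range (4 * m), f j = m * (f 0 + f 1 + f 2 + f 3) := by
  have hf' : ∀ n j, f (4 * n + j) = f j := by
    intro n
    induction n with
    | zero => intro j; simp
    | succ n ih => intro j; rw [show 4 * (n + 1) + j = (4 * n + j) + 4 by ring, hf, ih]
  induction m with
  | zero => simp
  | succ m ih =>
    rw [show 4 * (m + 1) = 4 * m + 1 + 1 + 1 + 1 by ring, sum_range_succ, sum_range_succ,
      sum_range_succ, sum_range_succ, ih]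
    have e0 : f (4 * m) = f 0 := by simpa using hf' m 0
    have e2 : f (4 * m + 1 + 1) = f 2 := hf' m 2
    have e3 : f (4 * m + 1 + 1 + 1) = f 3 := hf' m 3
    rw [e0, hf' m 1, e2, e3]
    push_cast
    ring

lemma four_dvd_of (B C q : ℤ) (h : B ^ 2 + 2 * C ^ 2 = 16 * q) :
    ∃ x y : ℤ, B = 4 * x ∧ C = 4 * y ∧ x ^ 2 + 2 * y ^ 2 = q := by
  have ev : ∀ X Y r : ℤ, X ^ 2 + 2 * Y ^ 2 = 4 * r →
      ∃ x y : ℤ, X = 2 * x ∧ Y = 2 * y ∧ x ^ 2 + 2 * y ^ 2 = r := by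
    intro X Y r h
    have h1 : Even X := by
      have : Even (X ^ 2) := ⟨2 * r - Y ^ 2, by linarith⟩
      exact (Int.even_pow.mp this).1
    obtain ⟨x, hx⟩ := h1
    have h2 : Even Y := by
      have : Even (Y ^ 2) := ⟨r - x ^ 2, by subst hx; linarith⟩
      exact (Int.even_pow.mp this).1
    obtain ⟨y, hy⟩ := h2
    refine ⟨x, y, by linarith, by linarith, ?_⟩
    subst hx hy
    linarith
  obtain ⟨x, y, h1, h2, h3⟩ := ev B C (4 * q) (by linarith)
  obtain ⟨x', y', h1', h2', h3'⟩ := ev x y q (by linarith)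
  exact ⟨x', y', by linarith, by linarith, h3'⟩

lemma BB_one_cast (hF : ringChar F ≠ 2) (m : ℕ) (hm : 0 < m) (hc : Fintype.card F = 8 * m + 1) :
    ((BB F 1 : ℤ) : F) = -2 * ((4 * m).choose m : F) := by
  unfold BB
  push_cast
  have h1 : ∀ u : F, ((quadraticChar F (u * (u ^ 4 + 1)) : ℤ) : F)
      = ∑ j ∈ range (4 * m + 1), ((4 * m).choose j : F) * u ^ (4 * j + 4 * m) := by
    intro u
    rw [quadraticChar_eq_pow_of_char_ne_two' hF, hc, show (8 * m + 1) / 2 = 4 * m by omega,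
      mul_pow, add_pow, mul_sum]
    apply sum_congr rfl
    intro j _
    rw [one_pow, ← pow_mul]
    ring
  simp only [h1]
  rw [sum_comm]
  have h2 : ∀ j ∈ range (4 * m + 1), ∑ u : F, ((4 * m).choose j : F) * u ^ (4 * j + 4 * m)
      = if j = m ∨ j = 3 * m then -((4 * m).choose j : F) else 0 := by
    intro j hj
    simp only [mem_range] at hj
    rw [← mul_sum]
    have hs : ∑ u : F, u ^ (4 * j + 4 * m) = if 8 * m ∣ 4 * j + 4 * m then (-1 : F) else 0 := by
      have := FiniteField.sum_pow_units F (4 * j + 4 * m)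
      rw [hc, Nat.add_sub_cancel] at this
      rw [← this]
      have h0 : ∑ u : F, u ^ (4 * j + 4 * m) = ∑ u ∈ univ \ {0}, (u : F) ^ (4 * j + 4 * m) := by
        rw [← sum_sdiff (subset_univ ({0} : Finset F)), sum_singleton, zero_pow (by omega), add_zero]
      rw [h0]
      symm
      apply sum_bij (fun (u : Fˣ) _ => (u : F))
      · intro u _; simp
      · intro u _ v _ h; exact Units.ext h
      · intro u hu
        simp only [mem_sdiff, mem_univ, mem_singleton, true_and] at hu
        exact ⟨Units.mk0 u hu, mem_univ _, rfl⟩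
      · intro u _; rfl
    rw [hs]
    have hiff : 8 * m ∣ 4 * j + 4 * m ↔ (j = m ∨ j = 3 * m) := by
      constructor
      · rintro ⟨t, ht⟩
        have h1 : j + m = 2 * m * t := by nlinarith
        have h2 : t < 3 := by
          by_contra h
          have : 2 * m * 3 ≤ 2 * m * t := Nat.mul_le_mul_left _ (by omega)
          omega
        interval_cases t
        · omega
        · left; omega
        · right; omega
      · rintro (rfl | rfl)
        · exact ⟨1, by ring⟩
        · exact ⟨2, by ring⟩
    simp only [hiff]
    split_ifs <;> ring
  rw [sum_congr rfl h2, ← sum_filter]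
  have h3 : (range (4 * m + 1)).filter (fun j => j = m ∨ j = 3 * m) = {m, 3 * m} := by
    ext j; simp only [mem_filter, mem_range, mem_insert, mem_singleton]; omega
  rw [h3, sum_pair (by omega), ← Nat.choose_symm (show 3 * m ≤ 4 * m by omega),
    show 4 * m - 3 * m = m by omega]
  ring

theorem charsum_main (p : ℕ) [CharP F p] (hp2 : p ≠ 2) (m : ℕ) (hm : 0 < m)
    (hc : Fintype.card F = 8 * m + 1) :
    ∃ x y : ℤ, x ^ 2 + 2 * y ^ 2 = Fintype.card F ∧ (p : ℤ) ∣ 2 * x + (4 * m).choose m := by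
  have hF : ringChar F ≠ 2 := by rwa [ringChar.eq F p]
  have h2 : (2 : F) ≠ 0 := Ring.two_ne_zero hF
  obtain ⟨g, hg⟩ := IsCyclic.exists_generator (α := Fˣ)
  have hcu : Fintype.card Fˣ = 8 * m := by rw [Fintype.card_units, hc]; omega
  have hord : orderOf g = 8 * m := by
    rw [orderOf_eq_card_of_forall_mem_zpowers hg, Nat.card_eq_fintype_card, hcu]
  have hhalf : (g : F) ^ (4 * m) = -1 := by
    have e1 : ((g : F) ^ (4 * m)) ^ 2 = 1 := by
      rw [← pow_mul, show 4 * m * 2 = 8 * m by ring, ← hord]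
      rw [← Units.val_pow_eq_pow_val, pow_orderOf_eq_one, Units.val_one]
    have e2 : (g : F) ^ (4 * m) ≠ 1 := by
      intro h
      have : g ^ (4 * m) = 1 := Units.ext (by rw [Units.val_pow_eq_pow_val, Units.val_one]; exact h)
      have := orderOf_dvd_of_pow_eq_one this
      rw [hord] at this
      have := Nat.le_of_dvd (by omega) this
      omega
    rcases mul_self_eq_one_iff.mp ((sq _).symm.trans e1) with h | h
    · exact absurd h e2
    · exact h
  have hg0 : (g : F) ≠ 0 := g.ne_zero
  have hz : ((g : F) ^ m) ^ 4 = -1 := by rw [← hhalf, ← pow_mul]; ring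
  have hχ : quadraticChar F (g : F) = -1 := by
    have := quadraticChar_eq_pow_of_char_ne_two hF hg0
    rw [this, hc, show (8 * m + 1) / 2 = 4 * m by omega, hhalf, if_neg]
    intro h; exact h2 (by linear_combination -h)
  have hper : ∀ k : F, BB F (k * (g : F) ^ 4) = - BB F k := by
    intro k; rw [BB_mul k _ hg0, hχ]; ring
  have hB2 : BB F ((g : F) ^ 2) = 0 := by
    have e1 := BB_inv ((g : F) ^ 2) (pow_ne_zero _ hg0)
    have e2 := hper ((g : F) ^ 2)⁻¹
    rw [show ((g : F) ^ 2)⁻¹ * (g : F) ^ 4 = (g : F) ^ 2 by field_simp] at e2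
    rw [quadraticChar_sq_one' hg0] at e1
    linarith
  have hB3 : BB F ((g : F) ^ 3) = BB F (g : F) := by
    have e1 := BB_inv (g : F) hg0
    have e2 := hper (g : F)⁻¹
    rw [show ((g : F))⁻¹ * (g : F) ^ 4 = (g : F) ^ 3 by field_simp] at e2
    rw [hχ] at e1
    linarith
  have hsum := BB_second_moment hF _ hz
  have h0 : BB F 0 = 0 := by
    unfold BB
    rw [← quadraticChar_sum_zero hF]
    apply sum_congr rfl
    intro u _
    by_cases hu : u = 0
    · simp [hu]
    · rw [show u * (u ^ 4 + 0) = (u ^ 2) ^ 2 * u by ring, map_mul,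
        quadraticChar_sq_one' (pow_ne_zero _ hu), one_mul]
  have hs2 : ∑ k : F, BB F k ^ 2 = ∑ j ∈ range (4 * (2 * m)), BB F ((g : F) ^ j) ^ 2 := by
    rw [← sum_sdiff (subset_univ ({0} : Finset F)), sum_singleton, h0]
    have himg : univ \ ({0} : Finset F) = (range (4 * (2 * m))).image (fun j => (g : F) ^ j) := by
      ext x
      simp only [mem_sdiff, mem_univ, mem_singleton, true_and, mem_image, mem_range]
      constructor
      · intro hx
        have hmem : Units.mk0 x hx ∈ (range (orderOf g)).image (fun j => g ^ j) := by
          rw [IsCyclic.image_range_orderOf hg]; exact mem_univ _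
        obtain ⟨j, hj, hj'⟩ := mem_image.mp hmem
        rw [mem_range, hord] at hj
        refine ⟨j, by omega, ?_⟩
        have := congrArg Units.val hj'
        rwa [Units.val_pow_eq_pow_val, Units.val_mk0] at this
      · rintro ⟨j, _, rfl⟩
        exact pow_ne_zero _ hg0
    rw [himg, sum_image]
    · ring
    · intro i hi j hj hij
      have hi : i < orderOf g := by rw [hord]; simp at hi; omega
      have hj : j < orderOf g := by rw [hord]; simp at hj; omega
      have : g ^ i = g ^ j := Units.ext (by rw [Units.val_pow_eq_pow_val, Units.val_pow_eq_pow_val]; exact hij)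
      exact pow_injOn_Iio_orderOf hi hj this
  rw [hs2, sum_periodic] at hsum
  swap
  · intro j
    rw [pow_add, hper]; ring
  rw [pow_zero, pow_one, hB2, hB3, hc] at hsum
  have hmz : (2 * m : ℤ) ≠ 0 := by positivity
  have hfin : BB F 1 ^ 2 + 2 * BB F (g : F) ^ 2 = 16 * ((8 * m + 1 : ℕ) : ℤ) := by
    apply mul_left_cancel₀ hmz
    push_cast at hsum ⊢
    linear_combination hsum
  obtain ⟨x, y, hx, hy, hxy⟩ := four_dvd_of _ _ _ hfin
  refine ⟨x, y, by rw [hc]; exact hxy, ?_⟩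
  rw [← CharP.intCast_eq_zero_iff F p]
  have := BB_one_cast hF m hm hc
  rw [hx] at this
  push_cast at this ⊢
  apply mul_left_cancel₀ h2
  linear_combination this

end charsum

section final
variable {p : ℕ} [hpp : Fact p.Prime]

lemma half_choose (n k : ℕ) (hn : p = 2 * n + 1) (hk : k ≤ n) :
    (-4 : ZMod p) ^ k * (n.choose k : ZMod p) = ((2 * k).choose k : ZMod p) := by
  induction k with
  | zero => simp
  | succ k ih =>
    have ih := ih (by omega)
    have hk0 : ((k + 1 : ℕ) : ZMod p) ≠ 0 := by
      apply ne_zero_of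
      intro hd
      have := Nat.le_of_dvd (by omega) hd
      omega
    apply mul_left_cancel₀ hk0
    have e1 := Nat.choose_succ_right_eq n k
    have e2 := Nat.succ_mul_centralBinom_succ k
    rw [Nat.centralBinom_eq_two_mul_choose, Nat.centralBinom_eq_two_mul_choose] at e2
    have e1' := congrArg (Nat.cast : ℕ → ZMod p) e1
    have e2' := congrArg (Nat.cast : ℕ → ZMod p) e2
    have e3 : (2 : ZMod p) * n = -1 := by
      have : ((2 * n + 1 : ℕ) : ZMod p) = 0 := by rw [← hn]; simp
      push_cast at this
      linear_combination this
    push_cast [Nat.cast_sub (show k ≤ n by omega)] at e1' e2' ⊢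
    rw [e2', ← ih, pow_succ]
    linear_combination (-4 : ZMod p) ^ k * (-4) * e1' - 2 * (-4 : ZMod p) ^ k * (n.choose k : ZMod p) * e3

lemma half_choose_sq (hp : 7 < p) (n k : ℕ) (hn : p = 2 * n + 1) (hk : k ≤ n) :
    (((2 * k).choose k : ZMod p) / 4 ^ k) ^ 2 = (n.choose k : ZMod p) ^ 2 := by
  rw [← half_choose n k hn hk, div_pow, mul_pow, neg_pow, mul_pow]
  have h4 := four_ne (p := p) hp
  have : ((-1 : ZMod p) ^ k) ^ 2 = 1 := by rw [← pow_mul, mul_comm, pow_mul]; simp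
  rw [this, one_mul]
  field_simp

lemma case_one (f : ℕ) (hf : 0 < f) (hq : p = 8 * f + 1) :
    ∃ x y : ℤ, (p : ℤ) = x ^ 2 + 2 * y ^ 2 ∧
      4 * (x : ZMod p) ^ 2 = ((4 * f).choose f : ZMod p) ^ 2 := by
  obtain ⟨x, y, h1, h2⟩ := charsum_main (F := ZMod p) p (by omega) f hf (by rw [ZMod.card]; exact hq)
  refine ⟨x, y, by rw [h1, ZMod.card], ?_⟩
  rw [← ZMod.intCast_zmod_eq_zero_iff_dvd] at h2
  push_cast at h2
  linear_combination (2 * (x : ZMod p) - ((4 * f).choose f : ZMod p)) * h2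

lemma factor_aux (u v c : ℤ) (hu : 0 ≤ u) (hv : 0 ≤ v) (hs : u + v = p) (h : u * v = 2 * c ^ 2)
    (hd : ¬ (p : ℤ) ∣ v) :
    ∃ X Y : ℤ, (u = 2 * Y ^ 2 ∧ v = X ^ 2) ∨ (v = 2 * Y ^ 2 ∧ u = X ^ 2) := by
  have hpi : Prime (p : ℤ) := Nat.prime_iff_prime_int.mp hpp.out
  have hcop : IsCoprime u v := by
    have h1 : IsCoprime (p : ℤ) v := (Prime.coprime_iff_not_dvd hpi).mpr hd
    rw [← hs] at h1
    obtain ⟨r, t, hrt⟩ := h1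
    exact ⟨r, r + t, by linear_combination hrt⟩
  have key : ∀ w z : ℤ, 0 ≤ w → 0 ≤ z → IsCoprime w z → w * z = 2 * c ^ 2 → Even w →
      ∃ X Y : ℤ, w = 2 * Y ^ 2 ∧ z = X ^ 2 := by
    rintro w z hw hz hc hm ⟨t, ht⟩
    have ht' : w = 2 * t := by linarith
    subst ht'
    have hm' : t * z = c ^ 2 := by linarith
    have hc' : IsCoprime t z := hc.of_mul_left_right
    obtain ⟨Y, hY⟩ := Int.sq_of_isCoprime hc' hm'
    obtain ⟨X, hX⟩ := Int.sq_of_isCoprime hc'.symm (by rw [mul_comm]; exact hm')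
    have e1 : t = Y ^ 2 := by
      rcases hY with h | h
      · exact h
      · have := sq_nonneg Y; linarith
    have e2 : z = X ^ 2 := by
      rcases hX with h | h
      · exact h
      · have := sq_nonneg X; linarith
    exact ⟨X, Y, by rw [e1], e2⟩
  have hev : Even (u * v) := ⟨c ^ 2, by linarith⟩
  rcases Int.even_mul.mp hev with he | he
  · obtain ⟨X, Y, h1, h2⟩ := key u v hu hv hcop h he
    exact ⟨X, Y, Or.inl ⟨h1, h2⟩⟩
  · obtain ⟨X, Y, h1, h2⟩ := key v u hv hu hcop.symm (by linarith) he
    exact ⟨X, Y, Or.inr ⟨h1, h2⟩⟩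

lemma charsum_three (f : ℕ) (hq : p = 8 * f + 3) :
    ∃ a b : ℤ, a ^ 2 + 2 * b ^ 2 = (p : ℤ) ^ 2 ∧
      2 * (a : ZMod p) = - ((4 * f + 1).choose f : ZMod p) ^ 2 := by
  classical
  letI : Fintype (GaloisField p 2) := Fintype.ofFinite _
  have hc : Fintype.card (GaloisField p 2) = 8 * (p * f + (3 * f + 1)) + 1 := by
    rw [← Nat.card_eq_fintype_card, GaloisField.card p 2 (by norm_num)]
    rw [hq]; ring
  obtain ⟨x, y, h1, h2⟩ := charsum_main (F := GaloisField p 2) p (by omega) _ (by omega) hc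
  refine ⟨x, y, ?_, ?_⟩
  · rw [h1, ← Nat.card_eq_fintype_card, GaloisField.card p 2 (by norm_num)]; push_cast; ring
  · rw [← ZMod.intCast_zmod_eq_zero_iff_dvd] at h2
    have hl := Choose.choose_modEq_choose_mod_mul_choose_div_nat (p := p)
      (n := 4 * (p * f + (3 * f + 1))) (k := p * f + (3 * f + 1))
    have e1 : 4 * (p * f + (3 * f + 1)) = (4 * f + 1) + p * (4 * f + 1) := by
      rw [hq]; ring
    have e2 : p * f + (3 * f + 1) = (3 * f + 1) + p * f := by ring
    have p0 : 0 < p := by omega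
    rw [e1, e2, Nat.add_mul_mod_self_left, Nat.add_mul_mod_self_left, Nat.add_mul_div_left _ _ p0,
      Nat.add_mul_div_left _ _ p0, Nat.mod_eq_of_lt (by omega), Nat.mod_eq_of_lt (by omega),
      Nat.div_eq_of_lt (by omega), Nat.div_eq_of_lt (by omega), zero_add, zero_add,
      ← e1, ← e2, ← ZMod.natCast_eq_natCast_iff,
      ← Nat.choose_symm (show 3 * f + 1 ≤ 4 * f + 1 by omega),
      show 4 * f + 1 - (3 * f + 1) = f by omega] at hl
    push_cast at h2 hl
    linear_combination h2 - hl

lemma case_three (f : ℕ) (hq : p = 8 * f + 3) :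
    ∃ x y : ℤ, (p : ℤ) = x ^ 2 + 2 * y ^ 2 ∧
      4 * (x : ZMod p) ^ 2 = ((4 * f + 1).choose f : ZMod p) ^ 2 := by
  obtain ⟨a, b, hab, hC⟩ := charsum_three f hq
  set C : ZMod p := ((4 * f + 1).choose f : ZMod p) with hCdef
  have hC0 : C ≠ 0 := by
    apply ne_zero_of
    intro hd
    have h1 : p ∣ (4 * f + 1).factorial := by
      rw [← Nat.choose_mul_factorial_mul_factorial (show f ≤ 4 * f + 1 by omega), mul_assoc]
      exact Dvd.dvd.mul_right hd _
    have := (Nat.Prime.dvd_factorial hpp.out).mp h1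
    omega
  have hpi : Prime (p : ℤ) := Nat.prime_iff_prime_int.mp hpp.out
  have hpa : ¬ (p : ℤ) ∣ a := by
    intro h
    rw [← ZMod.intCast_zmod_eq_zero_iff_dvd] at h
    rw [h] at hC
    have : C ^ 2 = 0 := by linear_combination hC
    exact hC0 (pow_eq_zero_iff (by norm_num) |>.mp this)
  have hodd : Odd a := by
    rw [← Int.not_even_iff_odd]
    intro ha
    have h1 : Even ((p : ℤ) ^ 2) := by
      rw [← hab]
      exact ((Int.even_pow.mpr ⟨ha, by norm_num⟩)).add (even_two_mul _)
    have h2 := (Int.even_pow.mp h1).1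
    rw [Int.even_coe_nat] at h2
    obtain ⟨t, ht⟩ := h2
    omega
  obtain ⟨t, ht⟩ := hodd
  obtain ⟨u, hu⟩ : ∃ u : ℤ, (p : ℤ) - a = 2 * u := ⟨4 * f + 1 - t, by rw [hq, ht]; push_cast; ring⟩
  obtain ⟨v, hv⟩ : ∃ v : ℤ, (p : ℤ) + a = 2 * v := ⟨4 * f + 2 + t, by rw [hq, ht]; push_cast; ring⟩
  have hb : b ^ 2 = 2 * (u * v) := by
    have : (2 * u) * (2 * v) = 2 * b ^ 2 := by rw [← hu, ← hv]; linear_combination -hab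
    linarith
  have hbe : Even b := by
    have : Even (b ^ 2) := by rw [hb]; exact even_two_mul _
    exact (Int.even_pow.mp this).1
  obtain ⟨c, hc⟩ := hbe
  have huv : u * v = 2 * c ^ 2 := by
    rw [hc] at hb; linarith
  have habs : |a| ≤ |(p : ℤ)| := by
    apply sq_le_sq.mp
    have := sq_nonneg b
    linarith
  rw [abs_of_nonneg (show (0 : ℤ) ≤ p by positivity)] at habs
  have hab2 := abs_le.mp habs
  have hs : u + v = p := by linarith
  have hva : v - u = a := by linarith
  have hd : ¬ (p : ℤ) ∣ v := by
    intro h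
    apply hpa
    have : a = 2 * v - p := by linarith
    rw [this]
    exact dvd_sub (Dvd.dvd.mul_left h 2) dvd_rfl
  obtain ⟨X, Y, hXY⟩ := factor_aux u v c (by linarith) (by linarith) hs huv hd
  refine ⟨X, Y, ?_, ?_⟩
  · rcases hXY with ⟨h1, h2⟩ | ⟨h1, h2⟩ <;> linarith
  · have hP : (X : ZMod p) ^ 2 + 2 * (Y : ZMod p) ^ 2 = 0 := by
      have h : X ^ 2 + 2 * Y ^ 2 = (p : ℤ) := by
        rcases hXY with ⟨h1, h2⟩ | ⟨h1, h2⟩ <;> linarith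
      have := congrArg (Int.cast : ℤ → ZMod p) h
      push_cast at this
      rw [this]; simp
    rcases hXY with ⟨h1, h2⟩ | ⟨h1, h2⟩
    · exfalso
      have h : a = X ^ 2 - 2 * Y ^ 2 := by linarith
      have h' := congrArg (Int.cast : ℤ → ZMod p) h
      push_cast at h'
      have hneg : (2 * (X : ZMod p)) ^ 2 = - C ^ 2 := by
        linear_combination hC - 2 * h' + 2 * hP
      have : IsSquare (-1 : ZMod p) := by
        refine ⟨2 * (X : ZMod p) / C, ?_⟩
        field_simp
        linear_combination -hneg
      rw [ZMod.exists_sq_eq_neg_one_iff] at this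
      omega
    · have h : a = 2 * Y ^ 2 - X ^ 2 := by linarith
      have h' := congrArg (Int.cast : ℤ → ZMod p) h
      push_cast at h'
      linear_combination -hC + 2 * h' + 2 * hP

lemma repr_unique (x y a b : ℤ) (h1 : (p : ℤ) = x ^ 2 + 2 * y ^ 2) (h2 : (p : ℤ) = a ^ 2 + 2 * b ^ 2) :
    x ^ 2 = a ^ 2 := by
  have hpi : Prime (p : ℤ) := Nat.prime_iff_prime_int.mp hpp.out
  have hp2 : (2 : ℤ) ≤ p := by exact_mod_cast hpp.out.two_le
  have hzero : ∀ w z : ℤ, (p : ℤ) ^ 2 = w ^ 2 + 2 * z ^ 2 → (p : ℤ) ∣ z → z = 0 := by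
    rintro w z h ⟨t, rfl⟩
    by_contra hne
    have ht : t ≠ 0 := by rintro rfl; simp at hne
    have ht2 : 1 ≤ t ^ 2 := by
      have : 0 < t ^ 2 := by positivity
      linarith
    have hw := sq_nonneg w
    have hpp2 : 0 < (p : ℤ) ^ 2 := by positivity
    nlinarith
  have hfin : (x * b - a * y) * (x * b + a * y) = 0 := by
    have hdvd : (p : ℤ) ∣ (x * b - a * y) * (x * b + a * y) :=
      ⟨b ^ 2 - y ^ 2, by
        have : (x * b - a * y) * (x * b + a * y)
          = b ^ 2 * (x ^ 2 + 2 * y ^ 2) - y ^ 2 * (a ^ 2 + 2 * b ^ 2) := by ring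
        rw [this, ← h1, ← h2]; ring⟩
    rcases hpi.dvd_or_dvd hdvd with h | h
    · rw [hzero (x * a + 2 * y * b) _ ?_ h, zero_mul]
      rw [sq (p : ℤ)]; nth_rewrite 1 [h1]; rw [h2]; ring
    · rw [hzero (x * a - 2 * y * b) _ ?_ h, mul_zero]
      rw [sq (p : ℤ)]; nth_rewrite 1 [h1]; rw [h2]; ring
  have h3 : (p : ℤ) * (b ^ 2 - y ^ 2) = 0 := by
    rw [← hfin]
    linear_combination b ^ 2 * h1 - y ^ 2 * h2
  have h4 : b ^ 2 - y ^ 2 = 0 := (mul_eq_zero.mp h3).resolve_left hpi.ne_zero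
  linarith

lemma main_repr (hp : 7 < p) (h : p % 8 = 1 ∨ p % 8 = 3) :
    ∃ x y : ℤ, (p : ℤ) = x ^ 2 + 2 * y ^ 2 ∧
      ∑ k ∈ range p, ((2 * k).choose k : ZMod p) ^ 2 * ((4 * k).choose (2 * k) : ZMod p) /
        (28 : ZMod p) ^ (4 * k) = 4 * (x : ZMod p) ^ 2 := by
  rcases h with h | h
  · obtain ⟨f, hf⟩ : ∃ f, p = 8 * f + 1 := ⟨p / 8, by omega⟩
    obtain ⟨x, y, h1, h2⟩ := case_one f (by omega) hf
    refine ⟨x, y, h1, ?_⟩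
    rw [S_eq_S' hp, S'_even hp f (by omega), half_choose_sq hp (4 * f) f (by omega) (by omega), h2]
  · obtain ⟨f, hf⟩ : ∃ f, p = 8 * f + 3 := ⟨p / 8, by omega⟩
    obtain ⟨x, y, h1, h2⟩ := case_three f hf
    refine ⟨x, y, h1, ?_⟩
    rw [S_eq_S' hp, S'_even hp f (by omega), half_choose_sq hp (4 * f + 1) f (by omega) (by omega), h2]

end final

theorem stmt_12 (p : ℕ) [Fact p.Prime] (hp : 7 < p) :
    (∑ k ∈ Finset.range p,
        (Nat.choose (2 * k) k : ZMod p) * (a k : ZMod p) / (100 : ZMod p) ^ k)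
      = (∑ k ∈ Finset.range p,
          (Nat.choose (2 * k) k : ZMod p) ^ 2 * (Nat.choose (4 * k) (2 * k) : ZMod p) /
            (28 : ZMod p) ^ (4 * k))
    ∧
    ((p % 8 = 1 ∨ p % 8 = 3) →
      (∃ x y : ℤ, (p : ℤ) = x ^ 2 + 2 * y ^ 2) ∧
        ∀ x y : ℤ, (p : ℤ) = x ^ 2 + 2 * y ^ 2 →
          (∑ k ∈ Finset.range p,
              (Nat.choose (2 * k) k : ZMod p) * (a k : ZMod p) / (100 : ZMod p) ^ k)
            = 4 * (x : ZMod p) ^ 2 ∧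
          (∑ k ∈ Finset.range p,
              (Nat.choose (2 * k) k : ZMod p) ^ 2 * (Nat.choose (4 * k) (2 * k) : ZMod p) /
                (28 : ZMod p) ^ (4 * k))
            = 4 * (x : ZMod p) ^ 2)
    ∧
    ((p % 8 = 5 ∨ p % 8 = 7) →
      (∑ k ∈ Finset.range p,
          (Nat.choose (2 * k) k : ZMod p) * (a k : ZMod p) / (100 : ZMod p) ^ k) = 0 ∧
      (∑ k ∈ Finset.range p,
          (Nat.choose (2 * k) k : ZMod p) ^ 2 * (Nat.choose (4 * k) (2 * k) : ZMod p) /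
            (28 : ZMod p) ^ (4 * k)) = 0) := by
  have hTS := T_eq_S (p := p) hp
  refine ⟨hTS, ?_, ?_⟩
  · intro h
    obtain ⟨x₀, y₀, h1, h2⟩ := main_repr (p := p) hp h
    refine ⟨⟨x₀, y₀, h1⟩, ?_⟩
    intro x y hxy
    have e : x ^ 2 = x₀ ^ 2 := repr_unique x y x₀ y₀ hxy h1
    have e' := congrArg (Int.cast : ℤ → ZMod p) e
    push_cast at e'
    rw [hTS, e']
    exact ⟨h2, h2⟩
  · intro h
    rw [hTS]
    have : ∑ k ∈ Finset.range p,
        (Nat.choose (2 * k) k : ZMod p) ^ 2 * (Nat.choose (4 * k) (2 * k) : ZMod p) /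
          (28 : ZMod p) ^ (4 * k) = 0 := by
      rw [S_eq_S' hp]
      exact S'_odd hp (p / 8) (by omega)
    exact ⟨this, this⟩
end

section
/- For every nonnegative integer n, (n+2)^2 · a_{n+2} − (10n^2 + 30n + 23) · a_{n+1} + 9(n+1)^2 · a_n = 0. -/
open Finset

lemma tele_aux (n m : ℕ) :
    ∑ k ∈ Finset.range (m + 1), ((((n : ℤ) + 2) ^ 2 * (Nat.choose (n + 2) k : ℤ) ^ 2
      - (10 * (n : ℤ) ^ 2 + 30 * (n : ℤ) + 23) * (Nat.choose (n + 1) k : ℤ) ^ 2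
      + 9 * ((n : ℤ) + 1) ^ 2 * (Nat.choose n k : ℤ) ^ 2) * (Nat.choose (2 * k) k : ℤ))
    = 2 * (2 * (m : ℤ) + 1) * (3 * (m : ℤ) - 4 * n - 5) * (Nat.choose (n + 1) m : ℤ) ^ 2
      * (Nat.choose (2 * m) m : ℤ) := by
  induction m with
  | zero => simp; ring
  | succ k ih =>
    rw [Finset.sum_range_succ, ih]
    have hc : ((k : ℤ) + 1) * (Nat.choose (2 * (k + 1)) (k + 1) : ℤ)
        = 2 * (2 * (k : ℤ) + 1) * (Nat.choose (2 * k) k : ℤ) := by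
      have := Nat.succ_mul_centralBinom_succ k
      simp only [Nat.centralBinom] at this
      exact_mod_cast this
    have h1 : ((k : ℤ) + 1) * (Nat.choose (n + 1) (k + 1) : ℤ)
        = ((n : ℤ) + 1 - k) * (Nat.choose (n + 1) k : ℤ) := by
      have e1 := Nat.add_one_mul_choose_eq n k
      have e2 : Nat.choose (n + 1) (k + 1) * (k + 1) + Nat.choose (n + 1) k * (k + 1)
          = Nat.choose (n + 2) (k + 1) * (k + 1) := by
        rw [Nat.choose_succ_succ (n + 1) k]; simp only [Nat.succ_eq_add_one]; ring
      have e3 := Nat.add_one_mul_choose_eq (n + 1) k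
      zify at e1 e2 e3
      linear_combination e2 - e3
    have h2 : ((n : ℤ) + 1) * (Nat.choose n (k + 1) : ℤ)
        = ((n : ℤ) - k) * (Nat.choose (n + 1) (k + 1) : ℤ) := by
      have e1 := Nat.add_one_mul_choose_eq n k
      have e2 := Nat.choose_succ_succ n k
      simp only [Nat.succ_eq_add_one] at e2
      zify at e1 e2
      linear_combination -((n : ℤ) + 1) * e2 - e1
    have h3 : (Nat.choose (n + 2) (k + 1) : ℤ)
        = Nat.choose (n + 1) k + Nat.choose (n + 1) (k + 1) := by
      exact_mod_cast Nat.choose_succ_succ (n + 1) k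
    rw [h3]
    have h4 : 9 * ((n : ℤ) + 1) ^ 2 * (Nat.choose n (k + 1) : ℤ) ^ 2
        = 9 * (((n : ℤ) - k) * (Nat.choose (n + 1) (k + 1) : ℤ)) ^ 2 := by
      rw [← h2]; ring
    rw [h4]
    push_cast
    generalize (Nat.choose (n + 1) k : ℤ) = u at *
    generalize (Nat.choose (n + 1) (k + 1) : ℤ) = v at *
    generalize (Nat.choose (2 * (k + 1)) (k + 1) : ℤ) = c at *
    linear_combination (-(3 * (k : ℤ) - 4 * n - 5) * u ^ 2) * hc
      + c * (-(3 * (k : ℤ) + 2 * n + 7) * v + (3 * (k : ℤ) - n + 1) * u) * h1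

lemma a_ext (n m : ℕ) (h : n ≤ m) : (a n : ℤ) = ∑ k ∈ Finset.range (m + 1),
    (Nat.choose n k : ℤ) ^ 2 * (Nat.choose (2 * k) k : ℤ) := by
  unfold a
  push_cast
  apply Finset.sum_subset
  · intro x hx
    simp only [Finset.mem_range] at *
    omega
  · intro x _ hx
    simp only [Finset.mem_range] at hx
    rw [Nat.choose_eq_zero_of_lt (by omega)]
    simp

theorem stmt_14 (n : ℕ) :
    ((n : ℤ) + 2) ^ 2 * (a (n + 2) : ℤ) - (10 * (n : ℤ) ^ 2 + 30 * (n : ℤ) + 23) * (a (n + 1) : ℤ)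
      + 9 * ((n : ℤ) + 1) ^ 2 * (a n : ℤ) = 0 := by
  have h := tele_aux n (n + 2)
  rw [Nat.choose_eq_zero_of_lt (show n + 1 < n + 2 by omega)] at h
  rw [a_ext (n + 2) (n + 2) le_rfl, a_ext (n + 1) (n + 2) (by omega), a_ext n (n + 2) (by omega),
    Finset.mul_sum, Finset.mul_sum, Finset.mul_sum, ← Finset.sum_sub_distrib,
    ← Finset.sum_add_distrib]
  refine Eq.trans (Finset.sum_congr rfl fun k _ => ?_) (h.trans (by simp))
  ring
end

section
/- For every nonnegative integer n, (n+2)^3 · A_{n+2} − 2(2n+3)(5n^2 + 15n + 12) · A_{n+1} + 64(n+1)^3 · A_n = 0. -/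
open Finset

/-- `A n = ∑_{k=0}^{n} C(2k,k)·C(2n-2k,n-k)·C(n,k)^2`. -/
def A (n : ℕ) : ℕ :=
  ∑ k ∈ Finset.range (n + 1),
    Nat.choose (2 * k) k * Nat.choose (2 * n - 2 * k) (n - k) * Nat.choose n k ^ 2

/-- The summand with `k = a` and `n - k = b`. -/
def ff (a b : ℕ) : ℚ :=
  (Nat.centralBinom a : ℚ) * (Nat.centralBinom b : ℚ) * ((a + b).choose a : ℚ) ^ 2

lemma ff_left (a b : ℕ) :
    ff (a + 1) b = 2 * ((a : ℚ) + b + 1) ^ 2 * (2 * a + 1) / ((a : ℚ) + 1) ^ 3 * ff a b := by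
  have h1 : ((a : ℚ) + 1) * (Nat.centralBinom (a + 1) : ℚ)
      = 2 * (2 * a + 1) * (Nat.centralBinom a : ℚ) := by
    exact_mod_cast Nat.succ_mul_centralBinom_succ a
  have h2 : ((a : ℚ) + b + 1) * ((a + b).choose a : ℚ)
      = ((a + 1 + b).choose (a + 1) : ℚ) * (a + 1) := by
    have := Nat.add_one_mul_choose_eq (a + b) a
    rw [show a + 1 + b = a + b + 1 by ring]
    exact_mod_cast this
  have ha : (a : ℚ) + 1 ≠ 0 := by positivity
  have h1' : (Nat.centralBinom (a + 1) : ℚ)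
      = 2 * (2 * a + 1) * (Nat.centralBinom a : ℚ) / ((a : ℚ) + 1) := by
    rw [← h1]; field_simp
  have h2' : ((a + 1 + b).choose (a + 1) : ℚ)
      = ((a : ℚ) + b + 1) * ((a + b).choose a : ℚ) / (a + 1) := by
    rw [h2]; field_simp
  unfold ff
  rw [h1', h2']
  field_simp

lemma ff_comm (a b : ℕ) : ff a b = ff b a := by
  unfold ff
  rw [show (a + b).choose a = (b + a).choose b by
    rw [add_comm b a]; exact Nat.choose_symm_add]
  ring

lemma ff_right (a b : ℕ) :
    ff a (b + 1) = 2 * ((a : ℚ) + b + 1) ^ 2 * (2 * b + 1) / ((b : ℚ) + 1) ^ 3 * ff a b := by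
  rw [ff_comm, ff_left, ff_comm b a]
  ring

/-- The Zeilberger operator applied to the summand, without the shift bookkeeping. -/
def TT (n k : ℕ) : ℚ :=
  ((n : ℚ) + 2) ^ 3 * ff k (n + 2 - k)
    - 2 * (2 * (n : ℚ) + 3) * (5 * (n : ℚ) ^ 2 + 15 * (n : ℚ) + 12) * ff k (n + 1 - k)
    + 64 * ((n : ℚ) + 1) ^ 3 * ff k (n - k)

/-- The polynomial part of the certificate. -/
def XX (n k : ℚ) : ℚ :=
  (-224 - 864 * n - 1304 * n ^ 2 - 960 * n ^ 3 - 344 * n ^ 4 - 48 * n ^ 5)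
    + (296 + 948 * n + 1112 * n ^ 2 + 564 * n ^ 3 + 104 * n ^ 4) * k
    + (-120 - 312 * n - 264 * n ^ 2 - 72 * n ^ 3) * k ^ 2
    + (16 + 32 * n + 16 * n ^ 2) * k ^ 3

lemma partial_sum (m : ℕ) : ∀ j : ℕ,
    ∑ k ∈ Finset.range m, TT (m + j) k
      = (m : ℚ) ^ 3 * (2 * j + 1) * XX ((m : ℚ) + j) m
          / (((j : ℚ) + 1) ^ 3 * ((j : ℚ) + 2) ^ 3) * ff m j := by
  induction m with
  | zero => intro j; simp
  | succ m ih =>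
    intro j
    have h := ih (j + 1)
    rw [show m + (j + 1) = m + 1 + j by ring] at h
    rw [Finset.sum_range_succ, h]
    unfold TT
    rw [show m + 1 + j + 2 - m = j + 1 + 1 + 1 by omega,
      show m + 1 + j + 1 - m = j + 1 + 1 by omega, show m + 1 + j - m = j + 1 by omega,
      ff_right m (j + 1 + 1), ff_right m (j + 1), ff_right m j, ff_left m j]
    unfold XX
    push_cast
    have hm : (m : ℚ) + 1 ≠ 0 := by positivity
    have h1 : (j : ℚ) + 1 ≠ 0 := by positivity
    have h2 : (j : ℚ) + 1 + 1 ≠ 0 := by positivity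
    have h2' : (j : ℚ) + 2 ≠ 0 := by positivity
    have h3 : (j : ℚ) + 1 + 1 + 1 ≠ 0 := by positivity
    have h3' : (j : ℚ) + 1 + 2 ≠ 0 := by positivity
    rw [show (j : ℚ) + 1 + 1 = j + 2 by ring, show (j : ℚ) + 2 + 1 = j + 3 by ring,
      show (j : ℚ) + 1 + 2 = j + 3 by ring]
    have h4 : (j : ℚ) + 3 ≠ 0 := by positivity
    field_simp
    ring

lemma A_eq (n : ℕ) : (A n : ℚ) = ∑ k ∈ Finset.range (n + 1), ff k (n - k) := by
  unfold A
  push_cast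
  refine Finset.sum_congr rfl fun k hk => ?_
  have hk : k ≤ n := by simpa [Nat.lt_succ_iff] using hk
  unfold ff
  rw [Nat.centralBinom, Nat.centralBinom, Nat.mul_sub, Nat.add_sub_cancel' hk]

theorem stmt_15 (n : ℕ) :
    ((n : ℤ) + 2) ^ 3 * (A (n + 2) : ℤ)
      - 2 * (2 * (n : ℤ) + 3) * (5 * (n : ℤ) ^ 2 + 15 * (n : ℤ) + 12) * (A (n + 1) : ℤ)
      + 64 * ((n : ℤ) + 1) ^ 3 * (A n : ℤ) = 0 := by
  have key : ((n : ℚ) + 2) ^ 3 * (A (n + 2) : ℚ)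
      - 2 * (2 * (n : ℚ) + 3) * (5 * (n : ℚ) ^ 2 + 15 * (n : ℚ) + 12) * (A (n + 1) : ℚ)
      + 64 * ((n : ℚ) + 1) ^ 3 * (A n : ℚ) = 0 := by
    have h := partial_sum n 0
    simp only [TT, Finset.sum_add_distrib, Finset.sum_sub_distrib, ← Finset.mul_sum,
      add_zero] at h
    rw [A_eq, A_eq, A_eq, Finset.sum_range_succ _ (n + 2), Finset.sum_range_succ _ (n + 1),
      Finset.sum_range_succ _ n, Finset.sum_range_succ _ (n + 1), Finset.sum_range_succ _ n,
      Finset.sum_range_succ _ n]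
    rw [show n + 2 - (n + 2) = 0 by omega, show n + 2 - (n + 1) = 0 + 1 by omega,
      show n + 2 - n = 0 + 1 + 1 by omega, show n + 1 - (n + 1) = 0 by omega,
      show n + 1 - n = 0 + 1 by omega, show n - n = 0 by omega,
      show n + 2 = n + 1 + 1 by ring,
      ff_left (n + 1) 0, ff_right (n + 1) 0, ff_right n (0 + 1), ff_right n 0, ff_left n 0]
    rw [show n + 2 = n + 1 + 1 by ring] at h
    have hn : (n : ℚ) + 1 ≠ 0 := by positivity
    have hn2 : (n : ℚ) + 2 ≠ 0 := by positivity
    have e : ∀ a b c x y z X Y Z : ℚ, a * X - b * Y + c * Z + (a * x - b * y + c * z) = 0 →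
      a * (X + x) - b * (Y + y) + c * (Z + z) = 0 := by
      intros; linarith
    simp only [add_assoc (Finset.sum _ _)]
    apply e
    rw [h]
    unfold XX
    push_cast
    rw [show (n : ℚ) + 1 + 0 + 1 = n + 2 by ring, show (n : ℚ) + 1 + 1 = n + 2 by ring]
    field_simp
    ring
  exact_mod_cast key
end

section
/- Define b_n = Σ_{k=0}^{n} C(2k,k)^2 · C(4k,2k) · C(n+3k,4k) · (-27)^{n-k} for each nonnegative integer n. Then for every nonnegative integer m, (m+2)^3 · b_{m+2} + (2m+3)(7m^2 + 21m + 17) · b_{m+1} + 81(m+1)^3 · b_m = 0. -/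
open Finset

/-- `b n = ∑_{k=0}^{n} C(2k,k)^2·C(4k,2k)·C(n+3k,4k)·(-27)^{n-k}`. -/
def b (n : ℕ) : ℤ :=
  ∑ k ∈ Finset.range (n + 1),
    (Nat.choose (2 * k) k : ℤ) ^ 2 * (Nat.choose (4 * k) (2 * k) : ℤ) *
      (Nat.choose (n + 3 * k) (4 * k) : ℤ) * (-27 : ℤ) ^ (n - k)

/-- Summand of `b n`, over the rationals. -/
def bterm (n k : ℕ) : ℚ :=
  (Nat.choose (2 * k) k : ℚ) ^ 2 * (Nat.choose (4 * k) (2 * k) : ℚ) *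
      (Nat.choose (n + 3 * k) (4 * k) : ℚ) * (-27 : ℚ) ^ (n - k)

/-- Auxiliary hypergeometric term. -/
def taux (m k : ℕ) : ℚ :=
  ((m + 3 * k).factorial : ℚ) / ((k.factorial : ℚ) ^ 4 * ((m + 2 - k).factorial : ℚ)) *
    (-27 : ℚ) ^ (m + 2 - k)

lemma fne (n : ℕ) : (n.factorial : ℚ) ≠ 0 := by exact_mod_cast n.factorial_ne_zero

lemma bterm_eq (j k : ℕ) :
    bterm (j + k) k =
      ((j + 4 * k).factorial : ℚ) / ((k.factorial : ℚ) ^ 4 * (j.factorial : ℚ)) * (-27) ^ j := by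
  unfold bterm
  have e1 : (Nat.choose (2 * k) k : ℚ) = (2 * k).factorial / (k.factorial * k.factorial) := by
    rw [Nat.cast_choose ℚ (by omega : k ≤ 2 * k), show 2 * k - k = k by omega]
  have e2 : (Nat.choose (4 * k) (2 * k) : ℚ)
      = (4 * k).factorial / ((2 * k).factorial * (2 * k).factorial) := by
    rw [Nat.cast_choose ℚ (by omega : 2 * k ≤ 4 * k), show 4 * k - 2 * k = 2 * k by omega]
  have e3 : (Nat.choose (j + k + 3 * k) (4 * k) : ℚ)
      = (j + 4 * k).factorial / ((4 * k).factorial * j.factorial) := by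
    rw [show j + k + 3 * k = j + 4 * k by omega,
      Nat.cast_choose ℚ (by omega : 4 * k ≤ j + 4 * k), show j + 4 * k - 4 * k = j by omega]
  rw [e1, e2, e3, show j + k - k = j by omega]
  have h1 := fne k
  have h2 := fne (2 * k)
  have h3 := fne (4 * k)
  have h4 := fne j
  field_simp

lemma bterm_zero (n k : ℕ) (h : n < k) : bterm n k = 0 := by
  unfold bterm
  rw [Nat.choose_eq_zero_of_lt (by omega : n + 3 * k < 4 * k)]
  simp

lemma b2 (m k : ℕ) (h : k ≤ m + 2) :
    bterm (m + 2) k = (m + 3 * k + 1) * (m + 3 * k + 2) * taux m k := by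
  obtain ⟨j, hj⟩ := Nat.exists_eq_add_of_le' h
  rw [hj, bterm_eq, taux, hj, show j + k - k = j by omega,
    show j + 4 * k = m + 3 * k + 1 + 1 by omega, Nat.factorial_succ, Nat.factorial_succ]
  push_cast
  ring

lemma b1 (m k : ℕ) (h : k ≤ m + 2) :
    bterm (m + 1) k = (m + 3 * k + 1) * ((m : ℚ) + 2 - k) * taux m k / (-27) := by
  rcases Nat.lt_or_ge (m + 1) k with h' | h'
  · rw [bterm_zero _ _ h']
    obtain rfl : k = m + 2 := by omega
    push_cast
    ring
  obtain ⟨j, hj⟩ := Nat.exists_eq_add_of_le' h'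
  have hc : (m : ℚ) + 2 - k = j + 1 := by
    have : (m : ℚ) + 1 = j + k := by exact_mod_cast hj
    linarith
  rw [hj, bterm_eq, taux, hc, show m + 2 - k = j + 1 by omega,
    show j + 4 * k = m + 3 * k + 1 by omega, Nat.factorial_succ, Nat.factorial_succ]
  have h1 := fne k
  have h4 := fne j
  have h5 : (j : ℚ) + 1 ≠ 0 := by positivity
  push_cast
  field_simp
  ring

lemma b0 (m k : ℕ) (h : k ≤ m + 2) :
    bterm m k = ((m : ℚ) + 1 - k) * ((m : ℚ) + 2 - k) * taux m k / 729 := by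
  rcases Nat.lt_or_ge m k with h' | h'
  · rw [bterm_zero _ _ h']
    obtain rfl | rfl : k = m + 1 ∨ k = m + 2 := by omega
    all_goals
      push_cast
      ring
  obtain ⟨j, hj⟩ := Nat.exists_eq_add_of_le' h'
  have hm : (m : ℚ) = j + k := by exact_mod_cast hj
  have hc : (m : ℚ) + 2 - k = j + 2 := by linarith
  have hc' : (m : ℚ) + 1 - k = j + 1 := by linarith
  have e : bterm m k = ((m + 3 * k).factorial : ℚ) / ((k.factorial : ℚ) ^ 4 * (j.factorial : ℚ))
      * (-27) ^ j := by
    rw [show m + 3 * k = j + 4 * k by omega, ← bterm_eq, ← hj]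
  rw [e, taux, hc, hc', show m + 2 - k = j + 1 + 1 by omega, Nat.factorial_succ (j + 1),
    Nat.factorial_succ]
  have h1 := fne k
  have h4 := fne j
  have h5 : (j : ℚ) + 1 ≠ 0 := by positivity
  have h6 : (j : ℚ) + 1 + 1 ≠ 0 := by positivity
  push_cast
  field_simp
  ring

lemma t_succ (m k : ℕ) (h : k < m + 2) :
    ((k : ℚ) + 1) ^ 4 * taux m (k + 1) =
      (m + 3 * k + 1) * (m + 3 * k + 2) * (m + 3 * k + 3) * ((m : ℚ) + 2 - k) * taux m k
        / (-27) := by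
  obtain ⟨j, hj⟩ := Nat.exists_eq_add_of_le' (show k + 1 ≤ m + 2 from h)
  have hc : (m : ℚ) + 2 - k = j + 1 := by
    have : (m : ℚ) + 2 = j + (k + 1) := by exact_mod_cast hj
    linarith
  rw [taux, taux, hc, show m + 2 - (k + 1) = j by omega, show m + 2 - k = j + 1 by omega,
    show m + 3 * (k + 1) = m + 3 * k + 1 + 1 + 1 by ring]
  simp only [Nat.factorial_succ]
  have h1 := fne k
  have h4 := fne j
  have h5 : (j : ℚ) + 1 ≠ 0 := by positivity
  have h6 : (k : ℚ) + 1 ≠ 0 := by positivity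
  push_cast
  field_simp
  ring

/-- Summand of the recurrence. -/
def comb (m k : ℕ) : ℚ :=
  ((m : ℚ) + 2) ^ 3 * bterm (m + 2) k
      + (2 * (m : ℚ) + 3) * (7 * (m : ℚ) ^ 2 + 21 * (m : ℚ) + 17) * bterm (m + 1) k
      + 81 * ((m : ℚ) + 1) ^ 3 * bterm m k

lemma comb_eq (m k : ℕ) (h : k ≤ m + 2) :
    comb m k = -4 * (4 * m + 7) * ((m + 3 * k + 1) * (m + 3 * k + 2) * (m + 3 * k + 3) *
      ((m : ℚ) + 2 - k) * taux m k / (-27)) - (-4 * (4 * m + 7)) * (k : ℚ) ^ 4 * taux m k := by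
  rw [comb, b2 m k h, b1 m k h, b0 m k h]
  ring

lemma partial_sum_s17 (m K : ℕ) (h : K ≤ m + 2) :
    ∑ k ∈ range K, comb m k = (-4 * (4 * m + 7)) * (K : ℚ) ^ 4 * taux m K := by
  induction K with
  | zero => simp
  | succ K ih =>
    rw [sum_range_succ, ih (by omega), comb_eq m K (by omega), ← t_succ m K (by omega)]
    push_cast
    ring

lemma total (m : ℕ) : ∑ k ∈ range (m + 3), comb m k = 0 := by
  rw [sum_range_succ, partial_sum_s17 m _ le_rfl, comb_eq m _ le_rfl]
  push_cast
  ring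

lemma b_cast (n N : ℕ) (h : n + 1 ≤ N) : (b n : ℚ) = ∑ k ∈ range N, bterm n k := by
  rw [← sum_subset (range_mono h)]
  · simp [b, bterm]
  · intro k _ hk
    exact bterm_zero _ _ (by simpa using hk)

theorem stmt_17 (m : ℕ) :
    ((m : ℤ) + 2) ^ 3 * b (m + 2)
      + (2 * (m : ℤ) + 3) * (7 * (m : ℤ) ^ 2 + 21 * (m : ℤ) + 17) * b (m + 1)
      + 81 * ((m : ℤ) + 1) ^ 3 * b m = 0 := by
  have h := total m
  simp only [comb, sum_add_distrib, ← mul_sum] at h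
  rw [← b_cast (m + 2) (m + 3) (by omega), ← b_cast (m + 1) (m + 3) (by omega),
    ← b_cast m (m + 3) (by omega)] at h
  exact_mod_cast h
end
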